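/- arXiv:2407.05028 — 4 statements merged into one kernel-verified Lean document; each statement's English description precedes it below -/
import Mathlib

section
/- Let s and e be composable labelled transition systems. If s mutually accepts e, then R_U(s,e) is an ecosim for s and e. -/
/-- Labels extended with the quiescence label `δ`. -/
inductive ELabel (Lab : Type) : Type
  | lab : Lab → ELabel Lab
  | delta : ELabel Lab

namespace ELabel

/-- Membership of an extended label in `𝓛^δ = 𝓛 ∪ {δ}`. -/
def inL {Lab : Type} (Ls : Set Lab) : ELabel Lab → Prop
  | lab ℓ => ℓ ∈ Ls
  | delta => True

end ELabel

/-- A trace lies in `(𝓛^δ)*`. -/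
def TraceIn {Lab : Type} (Ls : Set Lab) (σ : List (ELabel Lab)) : Prop :=
  ∀ x ∈ σ, ELabel.inL Ls x

/-- A labelled transition system.  `T q none q'` is an internal `τ`-step,
`T q (some ℓ) q'` is a step labelled `ℓ`. -/
structure LTS (Q : Type) (Lab : Type) where
  I : Set Lab
  U : Set Lab
  T : Q → Option Lab → Q → Prop
  q0 : Q

namespace LTS

variable {Q Lab : Type}

/-- The label set `L = I ∪ U`. -/
def L (M : LTS Q Lab) : Set Lab := M.I ∪ M.U

/-- Standing assumptions on all LTSs: countable, disjoint input/output label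
sets, transitions labelled within `L`, strong convergence (no infinite
`τ`-sequences), and image-finiteness. -/
def WellFormed (M : LTS Q Lab) : Prop :=
  M.I.Countable ∧ M.U.Countable ∧ Disjoint M.I M.U ∧
  (∀ q ℓ q', M.T q (some ℓ) q' → ℓ ∈ M.L) ∧
  (¬ ∃ f : ℕ → Q, ∀ n, M.T (f n) none (f (n + 1))) ∧
  (∀ q a, {q' | M.T q a q'}.Finite)

/-- A state is quiescent if neither an output nor `τ` is enabled in it. -/
def Quiescent (M : LTS Q Lab) (q : Q) : Prop :=
  (∀ x ∈ M.U, ∀ q', ¬ M.T q (some x) q') ∧ ∀ q', ¬ M.T q none q'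

/-- A single visible step `q --x--> q'` for `x ∈ L^δ`, where the quiescence
label `δ` gives a self-loop at quiescent states. -/
def VStep (M : LTS Q Lab) (q : Q) : ELabel Lab → Q → Prop
  | .lab ℓ, q' => M.T q (some ℓ) q'
  | .delta, q' => q' = q ∧ M.Quiescent q

/-- Zero or more `τ`-steps: `q ==ε==> q'`. -/
def Eps (M : LTS Q Lab) : Q → Q → Prop :=
  Relation.ReflTransGen fun a b => M.T a none b

/-- Weak transition `q ==σ==> q'` for `σ ∈ (L^δ)*`. -/
inductive W (M : LTS Q Lab) : Q → List (ELabel Lab) → Q → Prop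
  | nil {q q' : Q} : M.Eps q q' → W M q [] q'
  | snoc {q q1 q2 q' : Q} {σ : List (ELabel Lab)} {x : ELabel Lab} :
      W M q σ q1 → M.VStep q1 x q2 → M.Eps q2 q' → W M q (σ ++ [x]) q'

/-- `X after σ`, for a set of states `X`. -/
def afterSet (M : LTS Q Lab) (X : Set Q) (σ : List (ELabel Lab)) : Set Q :=
  {q' | ∃ q ∈ X, M.W q σ q'}

/-- `M after σ`, from the initial state. -/
def after (M : LTS Q Lab) (σ : List (ELabel Lab)) : Set Q :=
  {q' | M.W M.q0 σ q'}

/-- The predicate underlying `out(q) ⊆ U ∪ {δ}`. -/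
def outLabel (M : LTS Q Lab) (q : Q) : ELabel Lab → Prop
  | .lab ℓ => ℓ ∈ M.U ∧ ∃ q', M.T q (some ℓ) q'
  | .delta => M.Quiescent q

/-- `out(q)`. -/
def outq (M : LTS Q Lab) (q : Q) : Set (ELabel Lab) :=
  {x | M.outLabel q x}

/-- `in(q) = {ℓ ∈ I | q ==ℓ==>}`. -/
def inq (M : LTS Q Lab) (q : Q) : Set Lab :=
  {ℓ | ℓ ∈ M.I ∧ ∃ q', M.W q [ELabel.lab ℓ] q'}

/-- `out(X) = ⋃_{q ∈ X} out(q)`. -/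
def outSet (M : LTS Q Lab) (X : Set Q) : Set (ELabel Lab) :=
  ⋃ q ∈ X, M.outq q

/-- `in(X) = ⋂_{q ∈ X} in(q)`. -/
def inSet (M : LTS Q Lab) (X : Set Q) : Set Lab :=
  ⋂ q ∈ X, M.inq q

/-- Input-enabledness: `M` is an IOTS. -/
def InputEnabled (M : LTS Q Lab) : Prop :=
  ∀ q, ∀ ℓ ∈ M.I, ∃ q', M.W q [ELabel.lab ℓ] q'

/-- `Utraces(M)`. -/
def Utraces (M : LTS Q Lab) : Set (List (ELabel Lab)) :=
  {σ | TraceIn M.L σ ∧ (∃ q', M.W M.q0 σ q') ∧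
    ∀ σ1 ℓ σ2, σ = σ1 ++ ELabel.lab ℓ :: σ2 → ℓ ∈ M.I →
      ∀ q, M.W M.q0 σ1 q → ∃ q', M.W q [ELabel.lab ℓ] q'}

/-- An LTS is utrace-closed when every trace over `(L^δ)*` that it can
perform is a utrace. -/
def UtraceClosed (M : LTS Q Lab) : Prop :=
  ∀ σ : List (ELabel Lab), TraceIn M.L σ → (∃ q', M.W M.q0 σ q') → σ ∈ M.Utraces

end LTS

/-- `i uioco s`. -/
def Uioco {Qi Qs Lab : Type} (i : LTS Qi Lab) (s : LTS Qs Lab) : Prop :=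
  ∀ σ ∈ s.Utraces, i.outSet (i.after σ) ⊆ s.outSet (s.after σ)

/-- Composability: disjoint output label sets. -/
def Composable {Qs Qe Lab : Type} (s : LTS Qs Lab) (e : LTS Qe Lab) : Prop :=
  s.U ∩ e.U = ∅

/-- Parallel composition `s ∥ e`. -/
def par {Qs Qe Lab : Type} (s : LTS Qs Lab) (e : LTS Qe Lab) : LTS (Qs × Qe) Lab where
  I := (s.I \ e.U) ∪ (e.I \ s.U)
  U := s.U ∪ e.U
  T := fun p a p' =>
    match a with
    | none =>
        (s.T p.1 none p'.1 ∧ p'.2 = p.2) ∨ (e.T p.2 none p'.2 ∧ p'.1 = p.1)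
    | some ℓ =>
        (ℓ ∈ s.L ∧ ℓ ∉ e.L ∧ s.T p.1 (some ℓ) p'.1 ∧ p'.2 = p.2) ∨
        (ℓ ∈ e.L ∧ ℓ ∉ s.L ∧ e.T p.2 (some ℓ) p'.2 ∧ p'.1 = p.1) ∨
        (ℓ ∈ s.L ∧ ℓ ∈ e.L ∧ s.T p.1 (some ℓ) p'.1 ∧ e.T p.2 (some ℓ) p'.2)
  q0 := (s.q0, e.q0)

/-- `s accepts e`: along utraces of `s ∥ e`, every output of `e` that is an
input of `s` is (weakly) enabled in `s`. -/
def Accepts {Qs Qe Lab : Type} (s : LTS Qs Lab) (e : LTS Qe Lab) : Prop :=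
  ∀ σ ∈ (par s e).Utraces, ∀ qs qe, (par s e).W (par s e).q0 σ (qs, qe) →
    ∀ ℓ, ELabel.lab ℓ ∈ e.outq qe → ℓ ∈ s.I → ℓ ∈ s.inq qs

/-- `s mutually accepts e`. -/
def MutuallyAccepts {Qs Qe Lab : Type} (s : LTS Qs Lab) (e : LTS Qe Lab) : Prop :=
  Accepts s e ∧ Accepts e s

/-- `R` is an ecosim for `s` and `e`. -/
def IsEcosim {Qs Qe Lab : Type} (s : LTS Qs Lab) (e : LTS Qe Lab)
    (R : Set (Set Qs × Set Qe)) : Prop :=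
  (s.after [], e.after []) ∈ R ∧
  ∀ Xs Xe, (Xs, Xe) ∈ R →
    (∀ ℓ, ELabel.lab ℓ ∈ e.outSet Xe → ℓ ∈ s.I →
      ℓ ∈ s.inSet Xs ∧
        (s.afterSet Xs [ELabel.lab ℓ], e.afterSet Xe [ELabel.lab ℓ]) ∈ R) ∧
    (∀ ℓ, ELabel.lab ℓ ∈ s.outSet Xs → ℓ ∈ e.I →
      ℓ ∈ e.inSet Xe ∧
        (s.afterSet Xs [ELabel.lab ℓ], e.afterSet Xe [ELabel.lab ℓ]) ∈ R) ∧
    (∀ ℓ, (ELabel.lab ℓ ∈ e.outSet Xe ∨ ℓ ∈ e.inSet Xe) → ℓ ∉ s.L →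
      (Xs, e.afterSet Xe [ELabel.lab ℓ]) ∈ R) ∧
    (∀ ℓ, (ELabel.lab ℓ ∈ s.outSet Xs ∨ ℓ ∈ s.inSet Xs) → ℓ ∉ e.L →
      (s.afterSet Xs [ELabel.lab ℓ], Xe) ∈ R) ∧
    (∀ ℓ, ℓ ∈ s.inSet Xs → ℓ ∈ e.inSet Xe →
      (s.afterSet Xs [ELabel.lab ℓ], e.afterSet Xe [ELabel.lab ℓ]) ∈ R) ∧
    (ELabel.delta ∈ s.outSet Xs → ELabel.delta ∈ e.outSet Xe →
      (s.afterSet Xs [ELabel.delta], e.afterSet Xe [ELabel.delta]) ∈ R)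

/-- `s eco e`: there exists an ecosim for `s` and `e`. -/
def Eco {Qs Qe Lab : Type} (s : LTS Qs Lab) (e : LTS Qe Lab) : Prop :=
  ∃ R, IsEcosim s e R

/-- `R_U(s,e)`: the smallest relation closed under the given rules. -/
inductive RU {Qs Qe Lab : Type} (s : LTS Qs Lab) (e : LTS Qe Lab) :
    Set Qs → Set Qe → Prop
  | base : RU s e (s.after []) (e.after [])
  | syncOutE {Xs : Set Qs} {Xe : Set Qe} (ℓ : Lab) :
      RU s e Xs Xe → ELabel.lab ℓ ∈ e.outSet Xe → ℓ ∈ s.I →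
      RU s e (s.afterSet Xs [ELabel.lab ℓ]) (e.afterSet Xe [ELabel.lab ℓ])
  | syncOutS {Xs : Set Qs} {Xe : Set Qe} (ℓ : Lab) :
      RU s e Xs Xe → ELabel.lab ℓ ∈ s.outSet Xs → ℓ ∈ e.I →
      RU s e (s.afterSet Xs [ELabel.lab ℓ]) (e.afterSet Xe [ELabel.lab ℓ])
  | internalE {Xs : Set Qs} {Xe : Set Qe} (ℓ : Lab) :
      RU s e Xs Xe → (ELabel.lab ℓ ∈ e.outSet Xe ∨ ℓ ∈ e.inSet Xe) → ℓ ∉ s.L →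
      RU s e Xs (e.afterSet Xe [ELabel.lab ℓ])
  | internalS {Xs : Set Qs} {Xe : Set Qe} (ℓ : Lab) :
      RU s e Xs Xe → (ELabel.lab ℓ ∈ s.outSet Xs ∨ ℓ ∈ s.inSet Xs) → ℓ ∉ e.L →
      RU s e (s.afterSet Xs [ELabel.lab ℓ]) Xe
  | syncIn {Xs : Set Qs} {Xe : Set Qe} (ℓ : Lab) :
      RU s e Xs Xe → ℓ ∈ s.inSet Xs → ℓ ∈ e.inSet Xe →
      RU s e (s.afterSet Xs [ELabel.lab ℓ]) (e.afterSet Xe [ELabel.lab ℓ])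
  | qdelta {Xs : Set Qs} {Xe : Set Qe} :
      RU s e Xs Xe → ELabel.delta ∈ s.outSet Xs → ELabel.delta ∈ e.outSet Xe →
      RU s e (s.afterSet Xs [ELabel.delta]) (e.afterSet Xe [ELabel.delta])

open Classical in
/-- Projection `σ↾𝓛^δ` of a trace onto an (extended) label set: keeps `δ`
and the labels in `Ls`, removes all other labels. -/
noncomputable def projD {Lab : Type} (σ : List (ELabel Lab)) (Ls : Set Lab) :
    List (ELabel Lab) :=
  σ.filter fun x => decide (ELabel.inL Ls x)

open Classical in
/-- Projection `σ↾𝓛` of a trace of plain labels onto a label set. -/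
noncomputable def projL {Lab : Type} (σ : List Lab) (Ls : Set Lab) : List Lab :=
  σ.filter fun ℓ => decide (ℓ ∈ Ls)

open Classical in
/-- Substitution `σ[θ/δ]` of the label `θ` by the quiescence label `δ`. -/
noncomputable def substTheta {Lab : Type} (θ : Lab) (σ : List Lab) :
    List (ELabel Lab) :=
  σ.map fun ℓ => if ℓ = θ then ELabel.delta else ELabel.lab ℓ

/-- `⟨X⟩`: componentwise collection of a set of pairs of states. -/
def collect {Qs Qe : Type} (X : Set (Qs × Qe)) : Set Qs × Set Qe :=
  (Prod.fst '' X, Prod.snd '' X)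

/-- `q_s accepts q_e over σ`. -/
def AcceptsOver {Qs Qe Lab : Type} (s : LTS Qs Lab) (e : LTS Qe Lab)
    (qs : Qs) (qe : Qe) (σ : List (ELabel Lab)) : Prop :=
  ∀ σ1 σ2 : List (ELabel Lab), σ1 ++ σ2 = σ →
    ∀ (qs' : Qs) (qe' : Qe), (par s e).W (qs, qe) σ1 (qs', qe') →
      ∀ ℓ, ELabel.lab ℓ ∈ e.outq qe' → ℓ ∈ s.I → ℓ ∈ s.inq qs' ∧ ℓ ∈ e.U

/-- `q_s mutually accepts q_e over σ`. -/
def MutuallyAcceptsOver {Qs Qe Lab : Type} (s : LTS Qs Lab) (e : LTS Qe Lab)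
    (qs : Qs) (qe : Qe) (σ : List (ELabel Lab)) : Prop :=
  AcceptsOver s e qs qe σ ∧ AcceptsOver e s qe qs σ

/-- A test case: a quasi-finite tree-shaped LTS without `τ`-transitions, with
terminal states `pass` and `fail` carrying input self-loops, a special
quiescence-observation input `θ`, at most one output transition per state,
and receptive to all inputs other than `θ`. -/
structure TestCase (Qt Lab : Type) extends LTS Qt Lab where
  passS : Qt
  failS : Qt
  theta : Lab
  theta_input : theta ∈ I
  no_tau : ∀ q q', ¬ T q none q'
  tree : ∀ q, q ≠ q0 → q ≠ passS → q ≠ failS →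
    ∃! p : Qt × Option Lab, T p.1 p.2 q
  pass_loops : ∀ ℓ ∈ I, T passS (some ℓ) passS
  pass_terminal : ∀ a q', T passS a q' → q' = passS ∧ ∃ ℓ ∈ I, a = some ℓ
  fail_loops : ∀ ℓ ∈ I, T failS (some ℓ) failS
  fail_terminal : ∀ a q', T failS a q' → q' = failS ∧ ∃ ℓ ∈ I, a = some ℓ
  one_output : ∀ q ℓ ℓ' q' q'', ℓ ∈ U → ℓ' ∈ U →
    T q (some ℓ) q' → T q (some ℓ') q'' → ℓ = ℓ' ∧ q' = q''
  receptive : ∀ q, ∀ ℓ ∈ I, ℓ ≠ theta → ∃ q', T q (some ℓ) q'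

/-- Test execution `t ⫿ i` of a test case `t` with an implementation `i`. -/
def testExec {Qt Qi Lab : Type} (t : TestCase Qt Lab) (i : LTS Qi Lab) :
    LTS (Qt × Qi) Lab where
  I := ∅
  U := i.U ∪ (t.toLTS.L \ {t.theta})
  T := fun p a p' =>
    match a with
    | none => i.T p.2 none p'.2 ∧ p'.1 = p.1
    | some ℓ =>
        (ℓ ∈ i.L ∧ ℓ ∉ t.toLTS.L ∧ i.T p.2 (some ℓ) p'.2 ∧ p'.1 = p.1) ∨
        (ℓ ∈ t.toLTS.L ∧ ℓ ∉ i.L ∧ ℓ ≠ t.theta ∧ t.T p.1 (some ℓ) p'.1 ∧ p'.2 = p.2) ∨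
        (ℓ ∈ i.L ∧ ℓ ∈ t.toLTS.L ∧ t.T p.1 (some ℓ) p'.1 ∧ i.T p.2 (some ℓ) p'.2) ∨
        (ℓ = t.theta ∧ t.T p.1 (some ℓ) p'.1 ∧ p'.2 = p.2 ∧ i.Quiescent p.2)
  q0 := (t.q0, i.q0)

theorem LTS.W_snoc_iff {Q Lab : Type} (M : LTS Q Lab) (q : Q) (σ : List (ELabel Lab))
    (x : ELabel Lab) (q' : Q) :
    M.W q (σ ++ [x]) q' ↔ ∃ q1 q2, M.W q σ q1 ∧ M.VStep q1 x q2 ∧ M.Eps q2 q' := by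
  constructor
  · intro h
    generalize hτ : σ ++ [x] = τ at h
    cases h with
    | nil h => simp at hτ
    | snoc h1 h2 h3 =>
      have := List.append_inj' hτ rfl
      obtain ⟨rfl, h⟩ := this
      simp at h
      subst h
      exact ⟨_, _, h1, h2, h3⟩
  · rintro ⟨q1, q2, h1, h2, h3⟩
    exact .snoc h1 h2 h3

theorem LTS.W_nil_iff {Q Lab : Type} (M : LTS Q Lab) (q : Q) (q' : Q) :
    M.W q [] q' ↔ M.Eps q q' := by
  constructor
  · intro h
    generalize hτ : ([] : List (ELabel Lab)) = τ at h
    cases h with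
    | nil h => exact h
    | snoc h1 h2 h3 => simp at hτ
  · exact .nil

theorem LTS.W_single_iff {Q Lab : Type} (M : LTS Q Lab) (q : Q)
    (x : ELabel Lab) (q' : Q) :
    M.W q [x] q' ↔ ∃ q1 q2, M.Eps q q1 ∧ M.VStep q1 x q2 ∧ M.Eps q2 q' := by
  have := M.W_snoc_iff q [] x q'
  simpa [LTS.W_nil_iff] using this

theorem LTS.W_eps {Q Lab : Type} (M : LTS Q Lab) {q : Q} {σ : List (ELabel Lab)} {q1 q2 : Q}
    (h : M.W q σ q1) (h' : M.Eps q1 q2) : M.W q σ q2 := by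
  cases h with
  | nil h => exact .nil (Relation.ReflTransGen.trans h h')
  | snoc h1 h2 h3 => exact .snoc h1 h2 (Relation.ReflTransGen.trans h3 h')

theorem par_eps_iff {Qs Qe Lab : Type} (s : LTS Qs Lab) (e : LTS Qe Lab) (p p' : Qs × Qe) :
    (par s e).Eps p p' ↔ s.Eps p.1 p'.1 ∧ e.Eps p.2 p'.2 := by
  constructor
  · intro h
    unfold LTS.Eps at h
    induction h with
    | refl => exact ⟨.refl, .refl⟩
    | tail _ h ih =>
      rcases h with ⟨h, h'⟩ | ⟨h, h'⟩
      · exact ⟨ih.1.tail h, h' ▸ ih.2⟩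
      · exact ⟨h' ▸ ih.1, ih.2.tail h⟩
  · obtain ⟨a, b⟩ := p
    obtain ⟨a', b'⟩ := p'
    rintro ⟨h1, h2⟩
    have A : (par s e).Eps (a, b) (a', b) := by
      clear h2
      dsimp only at h1
      unfold LTS.Eps at h1
      induction h1 with
      | refl => exact .refl
      | tail _ h ih => exact Relation.ReflTransGen.tail ih (Or.inl ⟨h, rfl⟩)
    have B : (par s e).Eps (a', b) (a', b') := by
      clear A h1
      dsimp only at h2
      unfold LTS.Eps at h2
      induction h2 with
      | refl => exact .refl
      | tail _ h ih => exact Relation.ReflTransGen.tail ih (Or.inr ⟨h, rfl⟩)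
    exact Relation.ReflTransGen.trans A B

theorem LTS.utraces_snoc {Q Lab : Type} (M : LTS Q Lab) {σ : List (ELabel Lab)}
    {x : ELabel Lab} (h : σ ∈ M.Utraces) (hx : ELabel.inL M.L x)
    (hq : ∃ q, M.W M.q0 (σ ++ [x]) q)
    (hin : ∀ ℓ, x = .lab ℓ → ℓ ∈ M.I → ∀ q, M.W M.q0 σ q → ∃ q', M.W q [.lab ℓ] q') :
    σ ++ [x] ∈ M.Utraces := by
  refine ⟨?_, hq, ?_⟩
  · intro y hy
    rcases List.mem_append.1 hy with hy | hy
    · exact h.1 y hy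
    · simp at hy
      exact hy ▸ hx
  · intro σ1 ℓ σ2 heq hℓ q hW
    rcases List.eq_nil_or_concat σ2 with rfl | ⟨σ3, y, rfl⟩
    · have := List.append_inj' heq rfl
      obtain ⟨rfl, h'⟩ := this
      simp at h'
      exact hin ℓ h' hℓ q hW
    · have heq' : σ ++ [x] = (σ1 ++ .lab ℓ :: σ3) ++ [y] := by
        rw [heq]; simp
      obtain ⟨rfl, -⟩ := List.append_inj' heq' rfl
      exact h.2.2 σ1 ℓ σ3 rfl hℓ q hW

theorem par_W_swap {Qs Qe Lab : Type} (s : LTS Qs Lab) (e : LTS Qe Lab) (p : Qs × Qe)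
    (σ : List (ELabel Lab)) (p' : Qs × Qe) (h : (par s e).W p σ p') :
    (par e s).W p.swap σ p'.swap := by
  have hE : ∀ p p', (par s e).Eps p p' → (par e s).Eps p.swap p'.swap := by
    intro p p' h
    rw [par_eps_iff] at h ⊢
    exact ⟨h.2, h.1⟩
  have hT : ∀ (s : LTS Qs Lab) (e : LTS Qe Lab) p a p', (par s e).T p a p' →
      (par e s).T p.swap a p'.swap := by
    intro s e p a p' h
    cases a with
    | none => exact h.symm
    | some ℓ =>
      simp only [par, Prod.fst_swap, Prod.snd_swap] at h ⊢
      tauto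
  have hT' : ∀ p a p', (par e s).T p a p' → (par s e).T p.swap a p'.swap := by
    intro p a p' h
    cases a with
    | none => exact h.symm
    | some ℓ =>
      simp only [par, Prod.fst_swap, Prod.snd_swap] at h ⊢
      tauto
  induction h with
  | nil h => exact .nil (hE _ _ h)
  | @snoc q1 q2 q' σ x h1 h2 h3 ih =>
    refine .snoc ih ?_ (hE _ _ h3)
    cases x with
    | lab ℓ => exact hT _ _ _ _ _ h2
    | delta =>
      obtain ⟨rfl, hq1, hq2⟩ := h2
      refine ⟨rfl, ?_, ?_⟩
      · intro x hx q' hT2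
        exact hq1 x (Or.symm hx) _ (hT' _ _ _ hT2)
      · intro q' hT2
        exact hq2 _ (hT' _ _ _ hT2)

theorem par_L_swap {Qs Qe Lab : Type} (s : LTS Qs Lab) (e : LTS Qe Lab) :
    (par s e).L = (par e s).L := by
  simp only [LTS.L, par]
  ext; simp only [Set.mem_union, Set.mem_diff]; tauto

theorem par_utraces_swap {Qs Qe Lab : Type} (s : LTS Qs Lab) (e : LTS Qe Lab)
    (σ : List (ELabel Lab)) (h : σ ∈ (par s e).Utraces) : σ ∈ (par e s).Utraces := by
  obtain ⟨h1, ⟨q, h2⟩, h3⟩ := h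
  refine ⟨par_L_swap s e ▸ h1, ⟨q.swap, par_W_swap s e _ _ _ h2⟩, ?_⟩
  intro σ1 ℓ σ2 heq hℓ q hW
  obtain ⟨q', h'⟩ := h3 σ1 ℓ σ2 heq (Or.symm hℓ) q.swap (par_W_swap e s _ _ _ hW)
  exact ⟨q'.swap, par_W_swap s e _ _ _ h'⟩

/-- Invariant linking a utrace of the composition with a pair of state sets. -/
def RUInv {Qs Qe Lab : Type} (s : LTS Qs Lab) (e : LTS Qe Lab) (σ : List (ELabel Lab))
    (Xs : Set Qs) (Xe : Set Qe) : Prop :=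
  σ ∈ (par s e).Utraces ∧
    ∀ qs qe, (par s e).W (par s e).q0 σ (qs, qe) ↔ qs ∈ Xs ∧ qe ∈ Xe

theorem RUInv.nonempty {Qs Qe Lab : Type} {s : LTS Qs Lab} {e : LTS Qe Lab}
    {σ : List (ELabel Lab)} {Xs : Set Qs} {Xe : Set Qe} (h : RUInv s e σ Xs Xe) :
    (∃ q, q ∈ Xs) ∧ ∃ q, q ∈ Xe := by
  obtain ⟨⟨_, ⟨q, hq⟩, _⟩, h2⟩ := h
  have := (h2 q.1 q.2).1 hq
  exact ⟨⟨_, this.1⟩, ⟨_, this.2⟩⟩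

theorem RUInv.closed {Qs Qe Lab : Type} {s : LTS Qs Lab} {e : LTS Qe Lab}
    {σ : List (ELabel Lab)} {Xs : Set Qs} {Xe : Set Qe} (h : RUInv s e σ Xs Xe) :
    (∀ q ∈ Xs, ∀ q', s.Eps q q' → q' ∈ Xs) ∧ (∀ q ∈ Xe, ∀ q', e.Eps q q' → q' ∈ Xe) := by
  obtain ⟨⟨a, ha⟩, ⟨b, hb⟩⟩ := h.nonempty
  constructor
  · intro q hq q' hE
    exact ((h.2 q' b).1 (LTS.W_eps _ ((h.2 q b).2 ⟨hq, hb⟩)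
      ((par_eps_iff s e _ _).2 ⟨hE, .refl⟩))).1
  · intro q hq q' hE
    exact ((h.2 a q').1 (LTS.W_eps _ ((h.2 a q).2 ⟨ha, hq⟩)
      ((par_eps_iff s e _ _).2 ⟨.refl, hE⟩))).2

theorem RUInv.swap {Qs Qe Lab : Type} {s : LTS Qs Lab} {e : LTS Qe Lab}
    {σ : List (ELabel Lab)} {Xs : Set Qs} {Xe : Set Qe} (h : RUInv s e σ Xs Xe) :
    RUInv e s σ Xe Xs := by
  refine ⟨par_utraces_swap _ _ _ h.1, fun a b => ?_⟩
  constructor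
  · intro h'
    exact ((h.2 b a).1 (par_W_swap e s _ _ _ h')).symm
  · intro h'
    exact par_W_swap s e _ _ _ ((h.2 b a).2 h'.symm)

theorem RUInv.accepts {Qs Qe Lab : Type} {s : LTS Qs Lab} {e : LTS Qe Lab}
    {σ : List (ELabel Lab)} {Xs : Set Qs} {Xe : Set Qe} (h : RUInv s e σ Xs Xe)
    (ha : Accepts s e) (ℓ : Lab) (ho : ELabel.lab ℓ ∈ e.outSet Xe) (hI : ℓ ∈ s.I) :
    ℓ ∈ s.inSet Xs := by
  simp only [LTS.outSet, Set.mem_iUnion] at ho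
  obtain ⟨qe, hqe, ho⟩ := ho
  simp only [LTS.inSet, Set.mem_iInter]
  intro qs hqs
  exact ha σ h.1 qs qe ((h.2 _ _).2 ⟨hqs, hqe⟩) ℓ ho hI

theorem par_weak_sync {Qs Qe Lab : Type} {s : LTS Qs Lab} {e : LTS Qe Lab} {ℓ : Lab}
    (h1 : ℓ ∈ s.L) (h2 : ℓ ∈ e.L) {a a' : Qs} {b b' : Qe}
    (ha : s.W a [.lab ℓ] a') (hb : e.W b [.lab ℓ] b') :
    (par s e).W (a, b) [.lab ℓ] (a', b') := by
  rw [LTS.W_single_iff] at ha hb ⊢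
  obtain ⟨a1, a2, ha1, ha2, ha3⟩ := ha
  obtain ⟨b1, b2, hb1, hb2, hb3⟩ := hb
  exact ⟨(a1, b1), (a2, b2), (par_eps_iff _ _ _ _).2 ⟨ha1, hb1⟩,
    Or.inr (Or.inr ⟨h1, h2, ha2, hb2⟩), (par_eps_iff _ _ _ _).2 ⟨ha3, hb3⟩⟩

theorem par_weak_left {Qs Qe Lab : Type} {s : LTS Qs Lab} {e : LTS Qe Lab} {ℓ : Lab}
    (h1 : ℓ ∈ s.L) (h2 : ℓ ∉ e.L) {a a' : Qs} {b : Qe}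
    (ha : s.W a [.lab ℓ] a') :
    (par s e).W (a, b) [.lab ℓ] (a', b) := by
  rw [LTS.W_single_iff] at ha ⊢
  obtain ⟨a1, a2, ha1, ha2, ha3⟩ := ha
  exact ⟨(a1, b), (a2, b), (par_eps_iff _ _ _ _).2 ⟨ha1, .refl⟩,
    Or.inl ⟨h1, h2, ha2, rfl⟩, (par_eps_iff _ _ _ _).2 ⟨ha3, .refl⟩⟩

theorem LTS.W_snoc_trans {Q Lab : Type} (M : LTS Q Lab) {q : Q} {σ : List (ELabel Lab)}
    {x : ELabel Lab} {q1 q2 : Q} (h : M.W q σ q1) (h' : M.W q1 [x] q2) :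
    M.W q (σ ++ [x]) q2 := by
  rw [LTS.W_single_iff] at h'
  obtain ⟨a, b, h1, h2, h3⟩ := h'
  exact .snoc (M.W_eps h h1) h2 h3

theorem par_mem_L {Qs Qe Lab : Type} {s : LTS Qs Lab} {e : LTS Qe Lab} {ℓ : Lab}
    (h : ℓ ∈ s.L) : ℓ ∈ (par s e).L := by
  simp only [LTS.L, par, Set.mem_union, Set.mem_diff] at h ⊢
  tauto

theorem RUInv.sync {Qs Qe Lab : Type} {s : LTS Qs Lab} {e : LTS Qe Lab}
    {σ : List (ELabel Lab)} {Xs : Set Qs} {Xe : Set Qe} (h : RUInv s e σ Xs Xe) {ℓ : Lab}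
    (h1 : ℓ ∈ s.L) (h2 : ℓ ∈ e.L)
    (ha : ∃ a ∈ Xs, ∃ a', s.W a [.lab ℓ] a') (hb : ∃ a ∈ Xe, ∃ a', e.W a [.lab ℓ] a')
    (hI : ℓ ∈ (par s e).I → ℓ ∈ s.inSet Xs ∧ ℓ ∈ e.inSet Xe) :
    RUInv s e (σ ++ [.lab ℓ]) (s.afterSet Xs [.lab ℓ]) (e.afterSet Xe [.lab ℓ]) := by
  have key : ∀ qs qe, (par s e).W (par s e).q0 (σ ++ [.lab ℓ]) (qs, qe) ↔
      qs ∈ s.afterSet Xs [.lab ℓ] ∧ qe ∈ e.afterSet Xe [.lab ℓ] := by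
    intro qs qe
    constructor
    · intro hW
      rw [LTS.W_snoc_iff] at hW
      obtain ⟨⟨a, b⟩, ⟨a2, b2⟩, hW, hT, hE⟩ := hW
      rw [par_eps_iff] at hE
      have hX := (h.2 a b).1 hW
      rcases hT with hT | hT | hT
      · exact absurd h2 hT.2.1
      · exact absurd h1 hT.2.1
      · exact ⟨⟨a, hX.1, (s.W_single_iff _ _ _).2 ⟨a, a2, .refl, hT.2.2.1, hE.1⟩⟩,
          ⟨b, hX.2, (e.W_single_iff _ _ _).2 ⟨b, b2, .refl, hT.2.2.2, hE.2⟩⟩⟩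
    · rintro ⟨⟨a, haX, haW⟩, ⟨b, hbX, hbW⟩⟩
      exact LTS.W_snoc_trans _ ((h.2 a b).2 ⟨haX, hbX⟩) (par_weak_sync h1 h2 haW hbW)
  refine ⟨LTS.utraces_snoc _ h.1 (par_mem_L h1) ?_ ?_, key⟩
  · obtain ⟨a, ha, a', haW⟩ := ha
    obtain ⟨b, hb, b', hbW⟩ := hb
    exact ⟨(a', b'), (key _ _).2 ⟨⟨a, ha, haW⟩, ⟨b, hb, hbW⟩⟩⟩
  · rintro ℓ' heq hℓ ⟨a, b⟩ hW
    cases heq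
    obtain ⟨i1, i2⟩ := hI hℓ
    simp only [LTS.inSet, Set.mem_iInter] at i1 i2
    have hX := (h.2 a b).1 hW
    obtain ⟨_, a', ha'⟩ := i1 a hX.1
    obtain ⟨_, b', hb'⟩ := i2 b hX.2
    exact ⟨(a', b'), par_weak_sync h1 h2 ha' hb'⟩

theorem RUInv.left {Qs Qe Lab : Type} {s : LTS Qs Lab} {e : LTS Qe Lab}
    {σ : List (ELabel Lab)} {Xs : Set Qs} {Xe : Set Qe} (h : RUInv s e σ Xs Xe) {ℓ : Lab}
    (hd : Disjoint s.I s.U)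
    (ho : .lab ℓ ∈ s.outSet Xs ∨ ℓ ∈ s.inSet Xs) (h2 : ℓ ∉ e.L) :
    RUInv s e (σ ++ [.lab ℓ]) (s.afterSet Xs [.lab ℓ]) Xe := by
  obtain ⟨⟨a0, ha0⟩, ⟨b0, hb0⟩⟩ := h.nonempty
  have h1 : ℓ ∈ s.L := by
    rcases ho with ho | ho
    · simp only [LTS.outSet, Set.mem_iUnion] at ho
      obtain ⟨q, hq, ho⟩ := ho
      exact Or.inr ho.1
    · simp only [LTS.inSet, Set.mem_iInter] at ho
      exact Or.inl (ho a0 ha0).1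
  have hex : ∃ a ∈ Xs, ∃ a', s.W a [.lab ℓ] a' := by
    rcases ho with ho | ho
    · simp only [LTS.outSet, Set.mem_iUnion] at ho
      obtain ⟨q, hq, _, q', ho⟩ := ho
      exact ⟨q, hq, q', (s.W_single_iff _ _ _).2 ⟨q, q', .refl, ho, .refl⟩⟩
    · simp only [LTS.inSet, Set.mem_iInter] at ho
      exact ⟨a0, ha0, (ho a0 ha0).2⟩
  have key : ∀ qs qe, (par s e).W (par s e).q0 (σ ++ [.lab ℓ]) (qs, qe) ↔
      qs ∈ s.afterSet Xs [.lab ℓ] ∧ qe ∈ Xe := by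
    intro qs qe
    constructor
    · intro hW
      rw [LTS.W_snoc_iff] at hW
      obtain ⟨⟨a, b⟩, ⟨a2, b2⟩, hW, hT, hE⟩ := hW
      rw [par_eps_iff] at hE
      have hX := (h.2 a b).1 hW
      rcases hT with hT | hT | hT
      · obtain ⟨_, _, hT, hb⟩ := hT
        dsimp only at hb hT hE
        subst hb
        exact ⟨⟨a, hX.1, (s.W_single_iff _ _ _).2 ⟨a, a2, .refl, hT, hE.1⟩⟩,
          h.closed.2 _ hX.2 _ hE.2⟩
      · exact absurd h1 hT.2.1
      · exact absurd hT.2.1 h2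
    · rintro ⟨⟨a, haX, haW⟩, hbX⟩
      exact LTS.W_snoc_trans _ ((h.2 a qe).2 ⟨haX, hbX⟩) (par_weak_left h1 h2 haW)
  refine ⟨LTS.utraces_snoc _ h.1 (par_mem_L h1) ?_ ?_, key⟩
  · obtain ⟨a, ha, a', haW⟩ := hex
    exact ⟨(a', b0), (key _ _).2 ⟨⟨a, ha, haW⟩, hb0⟩⟩
  · rintro ℓ' heq hℓ ⟨a, b⟩ hW
    cases heq
    have hX := (h.2 a b).1 hW
    have hsI : ℓ ∈ s.I := by
      rcases hℓ with hℓ | hℓ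
      · exact hℓ.1
      · exact absurd (Or.inl hℓ.1) h2
    rcases ho with ho | ho
    · simp only [LTS.outSet, Set.mem_iUnion] at ho
      obtain ⟨q, hq, ho, _⟩ := ho
      exact absurd ho (Set.disjoint_left.1 hd hsI)
    · simp only [LTS.inSet, Set.mem_iInter] at ho
      obtain ⟨_, a', ha'⟩ := ho a hX.1
      exact ⟨(a', b), par_weak_left h1 h2 ha'⟩

theorem stable_weak {Q Lab : Type} {M : LTS Q Lab} {q : Q} (h : ∀ q', ¬ M.T q none q')
    {ℓ : Lab} {q' : Q} (hW : M.W q [.lab ℓ] q') : ∃ q2, M.T q (some ℓ) q2 := by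
  rw [LTS.W_single_iff] at hW
  obtain ⟨q1, q2, h1, h2, h3⟩ := hW
  rcases Relation.ReflTransGen.cases_head h1 with h1 | ⟨c, h1, _⟩
  · exact ⟨q2, h1 ▸ h2⟩
  · exact absurd h1 (h _)

theorem stable_eps {Q Lab : Type} {M : LTS Q Lab} {q : Q} (h : ∀ q', ¬ M.T q none q')
    {q' : Q} (hW : M.Eps q q') : q = q' := by
  rcases Relation.ReflTransGen.cases_head hW with h1 | ⟨c, h1, _⟩
  · exact h1
  · exact absurd h1 (h _)

theorem mem_afterSet_delta {Q Lab : Type} {M : LTS Q Lab} {X : Set Q}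
    (hc : ∀ q ∈ X, ∀ q', M.Eps q q' → q' ∈ X) (q : Q) :
    q ∈ M.afterSet X [.delta] ↔ q ∈ X ∧ M.Quiescent q := by
  constructor
  · rintro ⟨p, hp, hW⟩
    rw [LTS.W_single_iff] at hW
    obtain ⟨q1, q2, h1, ⟨rfl, h2⟩, h3⟩ := hW
    have := stable_eps h2.2 h3
    subst this
    exact ⟨hc _ hp _ h1, h2⟩
  · rintro ⟨h1, h2⟩
    exact ⟨q, h1, (M.W_single_iff _ _ _).2 ⟨q, q, .refl, ⟨rfl, h2⟩, .refl⟩⟩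

theorem par_quiescent_left {Qs Qe Lab : Type} {s : LTS Qs Lab} {e : LTS Qe Lab} {a : Qs} {b : Qe}
    (hq : (par s e).Quiescent (a, b))
    (hacc : ∀ ℓ, ELabel.lab ℓ ∈ s.outq a → ℓ ∈ e.I → ℓ ∈ e.inq b)
    (hc : s.U ∩ e.U = ∅) : s.Quiescent a := by
  refine ⟨?_, fun q' h => hq.2 (q', b) (Or.inl ⟨h, rfl⟩)⟩
  intro x hx q' hT
  by_cases hL : x ∈ e.L
  · have hI : x ∈ e.I := by
      rcases hL with h | h
      · exact h
      · exact absurd (show x ∈ s.U ∩ e.U from ⟨hx, h⟩) (by simp [hc])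
    obtain ⟨_, b', hb⟩ := hacc x ⟨hx, q', hT⟩ hI
    obtain ⟨b2, hb2⟩ := stable_weak (fun q' h => hq.2 (a, q') (Or.inr ⟨h, rfl⟩)) hb
    exact hq.1 x (Or.inl hx) (q', b2) (Or.inr (Or.inr ⟨Or.inr hx, hL, hT, hb2⟩))
  · exact hq.1 x (Or.inl hx) (q', b) (Or.inl ⟨Or.inr hx, hL, hT, rfl⟩)

theorem par_quiescent {Qs Qe Lab : Type} {s : LTS Qs Lab} {e : LTS Qe Lab} {a : Qs} {b : Qe}
    (h1 : s.Quiescent a) (h2 : e.Quiescent b) : (par s e).Quiescent (a, b) := by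
  constructor
  · rintro x hx ⟨a', b'⟩ hT
    rcases hx with hx | hx
    · rcases hT with hT | hT | hT
      · exact h1.1 x hx _ hT.2.2.1
      · exact hT.2.1 (Or.inr hx)
      · exact h1.1 x hx _ hT.2.2.1
    · rcases hT with hT | hT | hT
      · exact hT.2.1 (Or.inr hx)
      · exact h2.1 x hx _ hT.2.2.1
      · exact h2.1 x hx _ hT.2.2.2
  · rintro ⟨a', b'⟩ (hT | hT)
    · exact h1.2 _ hT.1
    · exact h2.2 _ hT.1

theorem par_quiescent_swap {Qs Qe Lab : Type} {s : LTS Qs Lab} {e : LTS Qe Lab} {a : Qs} {b : Qe}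
    (h : (par s e).Quiescent (a, b)) : (par e s).Quiescent (b, a) := by
  constructor
  · rintro x hx ⟨b', a'⟩ hT
    refine h.1 x (Or.symm hx) (a', b') ?_
    simp only [par] at hT ⊢
    tauto
  · rintro ⟨b', a'⟩ hT
    exact h.2 (a', b') (Or.symm hT)

theorem RUInv.delta {Qs Qe Lab : Type} {s : LTS Qs Lab} {e : LTS Qe Lab}
    {σ : List (ELabel Lab)} {Xs : Set Qs} {Xe : Set Qe} (h : RUInv s e σ Xs Xe)
    (hcomp : Composable s e) (hma : MutuallyAccepts s e)
    (h1 : ELabel.delta ∈ s.outSet Xs) (h2 : ELabel.delta ∈ e.outSet Xe) :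
    RUInv s e (σ ++ [.delta]) (s.afterSet Xs [.delta]) (e.afterSet Xe [.delta]) := by
  have key : ∀ qs qe, (par s e).W (par s e).q0 (σ ++ [.delta]) (qs, qe) ↔
      qs ∈ s.afterSet Xs [.delta] ∧ qe ∈ e.afterSet Xe [.delta] := by
    intro qs qe
    rw [mem_afterSet_delta h.closed.1, mem_afterSet_delta h.closed.2]
    constructor
    · intro hW
      rw [LTS.W_snoc_iff] at hW
      obtain ⟨q1, q2, hW, ⟨rfl, hq⟩, hE⟩ := hW
      have := stable_eps hq.2 hE
      subst this
      have hX := (h.2 _ _).1 hW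
      refine ⟨⟨hX.1, ?_⟩, ⟨hX.2, ?_⟩⟩
      · exact par_quiescent_left hq
          (hma.2 σ h.swap.1 qe qs ((h.swap.2 _ _).2 hX.symm)) hcomp
      · exact par_quiescent_left (par_quiescent_swap hq)
          (hma.1 σ h.1 qs qe hW) (by rw [Set.inter_comm]; exact hcomp)
    · rintro ⟨⟨a1, a2⟩, ⟨b1, b2⟩⟩
      exact .snoc ((h.2 _ _).2 ⟨a1, b1⟩) ⟨rfl, par_quiescent a2 b2⟩ .refl
  simp only [LTS.outSet, Set.mem_iUnion] at h1 h2
  obtain ⟨a, ha, haq⟩ := h1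
  obtain ⟨b, hb, hbq⟩ := h2
  refine ⟨LTS.utraces_snoc _ h.1 trivial ⟨(a, b), ?_⟩ ?_, key⟩
  · exact .snoc ((h.2 _ _).2 ⟨ha, hb⟩) ⟨rfl, par_quiescent haq hbq⟩ .refl
  · intro ℓ heq
    cases heq

theorem RUInv.syncOut {Qs Qe Lab : Type} {s : LTS Qs Lab} {e : LTS Qe Lab}
    {σ : List (ELabel Lab)} {Xs : Set Qs} {Xe : Set Qe} (h : RUInv s e σ Xs Xe) {ℓ : Lab}
    (hd : Disjoint e.I e.U) (hacc : Accepts s e)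
    (ho : .lab ℓ ∈ e.outSet Xe) (hI : ℓ ∈ s.I) :
    RUInv s e (σ ++ [.lab ℓ]) (s.afterSet Xs [.lab ℓ]) (e.afterSet Xe [.lab ℓ]) := by
  have hin := h.accepts hacc ℓ ho hI
  simp only [LTS.outSet, Set.mem_iUnion] at ho
  simp only [LTS.inSet, Set.mem_iInter] at hin
  obtain ⟨a0, ha0⟩ := h.nonempty.1
  obtain ⟨b, hb, hbU, b', hT⟩ := ho
  refine h.sync (Or.inl hI) (Or.inr hbU) ⟨a0, ha0, (hin a0 ha0).2⟩
    ⟨b, hb, b', (e.W_single_iff _ _ _).2 ⟨b, b', .refl, hT, .refl⟩⟩ ?_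
  rintro (h' | h')
  · exact absurd hbU h'.2
  · exact absurd hbU (Set.disjoint_left.1 hd h'.1)

theorem RU.exists_inv {Qs Qe Lab : Type} {s : LTS Qs Lab} {e : LTS Qe Lab}
    (hs : s.WellFormed) (he : e.WellFormed)
    (hcomp : Composable s e) (hma : MutuallyAccepts s e) {Xs : Set Qs} {Xe : Set Qe}
    (h : RU s e Xs Xe) : ∃ σ, RUInv s e σ Xs Xe := by
  induction h with
  | base =>
    refine ⟨[], ⟨?_, ⟨(s.q0, e.q0), .nil .refl⟩, ?_⟩, ?_⟩
    · intro x hx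
      simp at hx
    · intro σ1 ℓ σ2 heq
      simp at heq
    · intro qs qe
      simp only [LTS.after, Set.mem_setOf_eq, LTS.W_nil_iff]
      exact par_eps_iff s e _ _
  | syncOutE ℓ _ ho hI ih =>
    obtain ⟨σ, h⟩ := ih
    exact ⟨_, h.syncOut he.2.2.1 hma.1 ho hI⟩
  | syncOutS ℓ _ ho hI ih =>
    obtain ⟨σ, h⟩ := ih
    exact ⟨_, (h.swap.syncOut hs.2.2.1 hma.2 ho hI).swap⟩
  | internalE ℓ _ ho hI ih =>
    obtain ⟨σ, h⟩ := ih
    exact ⟨_, (h.swap.left he.2.2.1 ho hI).swap⟩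
  | internalS ℓ _ ho hI ih =>
    obtain ⟨σ, h⟩ := ih
    exact ⟨_, h.left hs.2.2.1 ho hI⟩
  | syncIn ℓ _ h1 h2 ih =>
    obtain ⟨σ, h⟩ := ih
    obtain ⟨⟨a0, ha0⟩, ⟨b0, hb0⟩⟩ := h.nonempty
    have h1' := h1
    have h2' := h2
    simp only [LTS.inSet, Set.mem_iInter] at h1' h2'
    exact ⟨_, h.sync (Or.inl (h1' a0 ha0).1) (Or.inl (h2' b0 hb0).1)
      ⟨a0, ha0, (h1' a0 ha0).2⟩ ⟨b0, hb0, (h2' b0 hb0).2⟩ fun _ => ⟨h1, h2⟩⟩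
  | qdelta _ h1 h2 ih =>
    obtain ⟨σ, h⟩ := ih
    exact ⟨_, h.delta hcomp hma h1 h2⟩

/-- for composable `s`, `e`, if `s` mutually accepts `e` then
`R_U(s,e)` is an ecosim for `s` and `e`. -/
theorem mutually_accepts_implies_RU_is_ecosim {Qs Qe Lab : Type}
    (s : LTS Qs Lab) (e : LTS Qe Lab)
    (hs : s.WellFormed) (he : e.WellFormed)
    (hcomp : Composable s e) (hma : MutuallyAccepts s e) :
    IsEcosim s e {p | RU s e p.1 p.2} := by
  refine ⟨RU.base, ?_⟩
  intro Xs Xe hR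
  obtain ⟨σ, h⟩ := RU.exists_inv hs he hcomp hma hR
  refine ⟨?_, ?_, ?_, ?_, ?_, ?_⟩
  · intro ℓ ho hI
    exact ⟨h.accepts hma.1 ℓ ho hI, RU.syncOutE ℓ hR ho hI⟩
  · intro ℓ ho hI
    exact ⟨h.swap.accepts hma.2 ℓ ho hI, RU.syncOutS ℓ hR ho hI⟩
  · intro ℓ ho hI
    exact RU.internalE ℓ hR ho hI
  · intro ℓ ho hI
    exact RU.internalS ℓ hR ho hI
  · intro ℓ h1 h2
    exact RU.syncIn ℓ hR h1 h2
  · intro h1 h2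
    exact RU.qdelta hR h1 h2
end

section
/- Let s and e be composable labelled transition systems. Then s eco e if and only if s mutually accepts e. -/
namespace EcoAux
open LTS

variable {Q Qs Qe Lab : Type}

theorem W_snoc (M : LTS Q Lab) {q q' : Q} {σ : List (ELabel Lab)} {x : ELabel Lab} :
    M.W q (σ ++ [x]) q' ↔ ∃ q1 q2, M.W q σ q1 ∧ M.VStep q1 x q2 ∧ M.Eps q2 q' := by
  constructor
  · intro h
    generalize hρ : σ ++ [x] = ρ at h
    cases h with
    | nil h => simp at hρ
    | snoc h1 h2 h3 =>
      obtain ⟨rfl, h⟩ := List.append_inj' hρ rfl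
      simp only [List.cons.injEq, and_true] at h
      subst h
      exact ⟨_, _, h1, h2, h3⟩
  · rintro ⟨q1, q2, h1, h2, h3⟩
    exact .snoc h1 h2 h3

theorem W_nil (M : LTS Q Lab) {q q' : Q} : M.W q [] q' ↔ M.Eps q q' := by
  constructor
  · intro h
    generalize hρ : ([] : List (ELabel Lab)) = ρ at h
    cases h with
    | nil h => exact h
    | snoc h1 h2 h3 => simp at hρ
  · exact .nil

theorem W_one (M : LTS Q Lab) {q q' : Q} {x : ELabel Lab} :
    M.W q [x] q' ↔ ∃ q1 q2, M.Eps q q1 ∧ M.VStep q1 x q2 ∧ M.Eps q2 q' := by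
  have := W_snoc M (q := q) (q' := q') (σ := []) (x := x)
  simpa [W_nil] using this

def Cl (M : LTS Q Lab) (X : Set Q) : Prop := ∀ q ∈ X, ∀ q', M.Eps q q' → q' ∈ X

def St (M : LTS Q Lab) (X : Set Q) (x : ELabel Lab) : Set Q :=
  {q' | ∃ q ∈ X, ∃ q2, M.VStep q x q2 ∧ M.Eps q2 q'}

theorem Cl_St (M : LTS Q Lab) (X : Set Q) (x : ELabel Lab) : Cl M (St M X x) := by
  rintro q ⟨p, hp, q2, h1, h2⟩ q' h
  exact ⟨p, hp, q2, h1, Relation.ReflTransGen.trans h2 h⟩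

theorem Cl_nil (M : LTS Q Lab) : Cl M (M.after []) := by
  intro q hq q' h
  exact (W_nil M).2 (Relation.ReflTransGen.trans ((W_nil M).1 hq) h)

theorem afterSet_eq (M : LTS Q Lab) {X : Set Q} (hX : Cl M X) (x : ELabel Lab) :
    M.afterSet X [x] = St M X x := by
  ext q'
  constructor
  · rintro ⟨q, hq, h⟩
    obtain ⟨q1, q2, h1, h2, h3⟩ := (W_one M).1 h
    exact ⟨q1, hX _ hq _ h1, q2, h2, h3⟩
  · rintro ⟨q, hq, q2, h2, h3⟩
    exact ⟨q, hq, (W_one M).2 ⟨q, q2, .refl, h2, h3⟩⟩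

theorem after_snoc (M : LTS Q Lab) (σ : List (ELabel Lab)) (x : ELabel Lab) :
    M.after (σ ++ [x]) = St M (M.after σ) x := by
  ext q'
  constructor
  · intro h
    obtain ⟨q1, q2, h1, h2, h3⟩ := (W_snoc M).1 h
    exact ⟨q1, h1, q2, h2, h3⟩
  · rintro ⟨q1, h1, q2, h2, h3⟩
    exact (W_snoc M).2 ⟨q1, q2, h1, h2, h3⟩

theorem nil_utrace (M : LTS Q Lab) : [] ∈ M.Utraces := by
  refine ⟨by intro x hx; simp at hx, ⟨M.q0, .nil .refl⟩, ?_⟩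
  intro σ1 ℓ σ2 h
  simp at h

theorem snoc_utrace (M : LTS Q Lab) {σ : List (ELabel Lab)} {x : ELabel Lab} :
    σ ++ [x] ∈ M.Utraces ↔ σ ∈ M.Utraces ∧ ELabel.inL M.L x ∧ (St M (M.after σ) x).Nonempty ∧
      ∀ ℓ, x = .lab ℓ → ℓ ∈ M.I → ∀ q ∈ M.after σ, ∃ q', M.W q [.lab ℓ] q' := by
  constructor
  · rintro ⟨h1, ⟨q', h2⟩, h3⟩
    refine ⟨⟨fun y hy => h1 y (by simp [hy]), ?_, ?_⟩, h1 x (by simp), ?_, ?_⟩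
    · obtain ⟨q1, q2, h, -⟩ := (W_snoc M).1 h2
      exact ⟨q1, h⟩
    · intro σ1 ℓ σ2 h
      exact h3 σ1 ℓ (σ2 ++ [x]) (by simp [h])
    · rw [← after_snoc]
      exact ⟨q', h2⟩
    · rintro ℓ rfl hℓ q hq
      exact h3 σ ℓ [] rfl hℓ q hq
  · rintro ⟨⟨h1, h2, h3⟩, h4, h5, h6⟩
    refine ⟨?_, ?_, ?_⟩
    · intro y hy
      simp only [List.mem_append, List.mem_singleton] at hy
      rcases hy with hy | rfl
      · exact h1 y hy
      · exact h4
    · rw [← after_snoc] at h5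
      exact h5
    · intro σ1 ℓ σ2 h
      rcases List.eq_nil_or_concat σ2 with rfl | ⟨τ, y, rfl⟩
      · obtain ⟨rfl, hx⟩ := List.append_inj' h rfl
        exact fun hℓ q hq => h6 ℓ (List.cons.inj hx).1 hℓ q hq
      · have h' : σ ++ [x] = (σ1 ++ ELabel.lab ℓ :: τ) ++ [y] := by simpa using h
        obtain ⟨h'', -⟩ := List.append_inj' h' rfl
        exact h3 σ1 ℓ τ h''

theorem par_eps (s : LTS Qs Lab) (e : LTS Qe Lab) {p p' : Qs × Qe} :
    (par s e).Eps p p' ↔ s.Eps p.1 p'.1 ∧ e.Eps p.2 p'.2 := by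
  constructor
  · intro h
    induction h with
    | refl => exact ⟨.refl, .refl⟩
    | tail _ h ih =>
      rcases h with ⟨h, h'⟩ | ⟨h, h'⟩
      · exact ⟨ih.1.tail h, h' ▸ ih.2⟩
      · exact ⟨h' ▸ ih.1, ih.2.tail h⟩
  · obtain ⟨a, b⟩ := p
    obtain ⟨c, d⟩ := p'
    rintro ⟨h1, h2⟩
    dsimp only at h1 h2
    have A : (par s e).Eps (a, b) (c, b) := by
      induction h1 with
      | refl => exact .refl
      | tail _ h ih => exact ih.tail (Or.inl ⟨h, rfl⟩)
    have B : (par s e).Eps (c, b) (c, d) := by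
      induction h2 with
      | refl => exact .refl
      | tail _ h ih => exact ih.tail (Or.inr ⟨h, rfl⟩)
    exact Relation.ReflTransGen.trans A B

variable (s : LTS Qs Lab) (e : LTS Qe Lab)

theorem vstep_S {ℓ : Lab} (h1 : ℓ ∈ s.L) (h2 : ℓ ∉ e.L) {p p' : Qs × Qe} :
    (par s e).VStep p (.lab ℓ) p' ↔ s.VStep p.1 (.lab ℓ) p'.1 ∧ p'.2 = p.2 := by
  simp [VStep, par, h1, h2]

theorem vstep_E {ℓ : Lab} (h1 : ℓ ∉ s.L) (h2 : ℓ ∈ e.L) {p p' : Qs × Qe} :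
    (par s e).VStep p (.lab ℓ) p' ↔ e.VStep p.2 (.lab ℓ) p'.2 ∧ p'.1 = p.1 := by
  simp [VStep, par, h1, h2]

theorem vstep_B {ℓ : Lab} (h1 : ℓ ∈ s.L) (h2 : ℓ ∈ e.L) {p p' : Qs × Qe} :
    (par s e).VStep p (.lab ℓ) p' ↔ s.VStep p.1 (.lab ℓ) p'.1 ∧ e.VStep p.2 (.lab ℓ) p'.2 := by
  simp [VStep, par, h1, h2]

theorem St_S {ℓ : Lab} (h1 : ℓ ∈ s.L) (h2 : ℓ ∉ e.L) {X : Set Qs} {Y : Set Qe} (hY : Cl e Y) :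
    St (par s e) (X ×ˢ Y) (.lab ℓ) = St s X (.lab ℓ) ×ˢ Y := by
  ext ⟨a, b⟩
  constructor
  · rintro ⟨⟨p, q⟩, ⟨hp, hq⟩, ⟨p', q'⟩, h, h'⟩
    rw [vstep_S s e h1 h2] at h
    rw [par_eps] at h'
    obtain ⟨h, rfl⟩ := h
    exact ⟨⟨p, hp, p', h, h'.1⟩, hY _ hq _ h'.2⟩
  · rintro ⟨⟨p, hp, p', h, h'⟩, hb⟩
    exact ⟨(p, b), ⟨hp, hb⟩, (p', b), (vstep_S s e h1 h2).2 ⟨h, rfl⟩, (par_eps s e).2 ⟨h', .refl⟩⟩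

theorem St_E {ℓ : Lab} (h1 : ℓ ∉ s.L) (h2 : ℓ ∈ e.L) {X : Set Qs} {Y : Set Qe} (hX : Cl s X) :
    St (par s e) (X ×ˢ Y) (.lab ℓ) = X ×ˢ St e Y (.lab ℓ) := by
  ext ⟨a, b⟩
  constructor
  · rintro ⟨⟨p, q⟩, ⟨hp, hq⟩, ⟨p', q'⟩, h, h'⟩
    rw [vstep_E s e h1 h2] at h
    rw [par_eps] at h'
    obtain ⟨h, rfl⟩ := h
    exact ⟨hX _ hp _ h'.1, ⟨q, hq, q', h, h'.2⟩⟩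
  · rintro ⟨ha, ⟨p, hp, p', h, h'⟩⟩
    exact ⟨(a, p), ⟨ha, hp⟩, (a, p'), (vstep_E s e h1 h2).2 ⟨h, rfl⟩, (par_eps s e).2 ⟨.refl, h'⟩⟩

theorem St_B {ℓ : Lab} (h1 : ℓ ∈ s.L) (h2 : ℓ ∈ e.L) {X : Set Qs} {Y : Set Qe} :
    St (par s e) (X ×ˢ Y) (.lab ℓ) = St s X (.lab ℓ) ×ˢ St e Y (.lab ℓ) := by
  ext ⟨a, b⟩
  constructor
  · rintro ⟨⟨p, q⟩, ⟨hp, hq⟩, ⟨p', q'⟩, h, h'⟩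
    rw [vstep_B s e h1 h2] at h
    rw [par_eps] at h'
    exact ⟨⟨p, hp, p', h.1, h'.1⟩, ⟨q, hq, q', h.2, h'.2⟩⟩
  · rintro ⟨⟨p, hp, p', h, h'⟩, ⟨q, hq, q', k, k'⟩⟩
    exact ⟨(p, q), ⟨hp, hq⟩, (p', q'), (vstep_B s e h1 h2).2 ⟨h, k⟩, (par_eps s e).2 ⟨h', k'⟩⟩

theorem wk_S {ℓ : Lab} (h1 : ℓ ∈ s.L) (h2 : ℓ ∉ e.L) {p : Qs × Qe} :
    (∃ p', (par s e).W p [.lab ℓ] p') ↔ ∃ q, s.W p.1 [.lab ℓ] q := by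
  simp only [W_one, vstep_S s e h1 h2, par_eps]
  constructor
  · rintro ⟨p', q1, q2, h, h', h''⟩
    exact ⟨_, _, _, h.1, h'.1, h''.1⟩
  · rintro ⟨p', q1, q2, h, h', h''⟩
    exact ⟨(p', p.2), (q1, p.2), (q2, p.2), ⟨h, .refl⟩, ⟨h', rfl⟩, h'', .refl⟩

theorem wk_E {ℓ : Lab} (h1 : ℓ ∉ s.L) (h2 : ℓ ∈ e.L) {p : Qs × Qe} :
    (∃ p', (par s e).W p [.lab ℓ] p') ↔ ∃ q, e.W p.2 [.lab ℓ] q := by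
  simp only [W_one, vstep_E s e h1 h2, par_eps]
  constructor
  · rintro ⟨p', q1, q2, h, h', h''⟩
    exact ⟨_, _, _, h.2, h'.1, h''.2⟩
  · rintro ⟨p', q1, q2, h, h', h''⟩
    exact ⟨(p.1, p'), (p.1, q1), (p.1, q2), ⟨.refl, h⟩, ⟨h', rfl⟩, .refl, h''⟩

theorem wk_B {ℓ : Lab} (h1 : ℓ ∈ s.L) (h2 : ℓ ∈ e.L) {p : Qs × Qe} :
    (∃ p', (par s e).W p [.lab ℓ] p') ↔
      (∃ q, s.W p.1 [.lab ℓ] q) ∧ ∃ q, e.W p.2 [.lab ℓ] q := by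
  simp only [W_one, vstep_B s e h1 h2, par_eps]
  constructor
  · rintro ⟨p', q1, q2, h, h', h''⟩
    exact ⟨⟨_, _, _, h.1, h'.1, h''.1⟩, _, _, _, h.2, h'.2, h''.2⟩
  · rintro ⟨⟨p', q1, q2, h, h', h''⟩, ⟨r', r1, r2, k, k', k''⟩⟩
    exact ⟨(p', r'), (q1, r1), (q2, r2), ⟨h, k⟩, ⟨h', k'⟩, h'', k''⟩

/-- Mutual acceptance of a pair of state sets. -/
def OK (X : Set Qs) (Y : Set Qe) : Prop := ∀ p ∈ X, ∀ q ∈ Y, ∀ ℓ,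
  (.lab ℓ ∈ e.outq q → ℓ ∈ s.I → ℓ ∈ s.inq p) ∧ (.lab ℓ ∈ s.outq p → ℓ ∈ e.I → ℓ ∈ e.inq q)

/-- A weak step from a state without internal steps is a strong one. -/
theorem strong (M : LTS Q Lab) {q q' : Q} {ℓ : Lab} (h : ∀ q', ¬ M.T q none q')
    (hw : M.W q [.lab ℓ] q') : ∃ r, M.T q (some ℓ) r := by
  obtain ⟨q1, q2, h1, h2, h3⟩ := (W_one M).1 hw
  rcases Relation.ReflTransGen.cases_head h1 with rfl | ⟨c, hc, _⟩
  · exact ⟨_, h2⟩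
  · exact absurd hc (h c)

theorem quiet (hcomp : Composable s e) {X : Set Qs} {Y : Set Qe} (hok : OK s e X Y)
    {p : Qs} {q : Qe} (hp : p ∈ X) (hq : q ∈ Y) :
    (par s e).Quiescent (p, q) ↔ s.Quiescent p ∧ e.Quiescent q := by
  constructor
  · rintro ⟨h1, h2⟩
    have hτs : ∀ p', ¬ s.T p none p' := fun p' h => h2 (p', q) (Or.inl ⟨h, rfl⟩)
    have hτe : ∀ q', ¬ e.T q none q' := fun q' h => h2 (p, q') (Or.inr ⟨h, rfl⟩)
    refine ⟨⟨?_, hτs⟩, ⟨?_, hτe⟩⟩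
    · intro x hx p' h
      have hxe : x ∉ e.U := fun h => by
        have : x ∈ s.U ∩ e.U := ⟨hx, h⟩
        rw [hcomp] at this
        exact this
      by_cases hi : x ∈ e.I
      · obtain ⟨-, r, hr⟩ := (hok p hp q hq x).2 ⟨hx, p', h⟩ hi
        obtain ⟨r', hr'⟩ := strong e hτe hr
        exact h1 x (Or.inl hx) (p', r') (Or.inr (Or.inr ⟨Or.inr hx, Or.inl hi, h, hr'⟩))
      · exact h1 x (Or.inl hx) (p', q) (Or.inl ⟨Or.inr hx, fun k => k.elim hi hxe, h, rfl⟩)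
    · intro x hx q' h
      have hxs : x ∉ s.U := fun h => by
        have : x ∈ s.U ∩ e.U := ⟨h, hx⟩
        rw [hcomp] at this
        exact this
      by_cases hi : x ∈ s.I
      · obtain ⟨-, r, hr⟩ := (hok p hp q hq x).1 ⟨hx, q', h⟩ hi
        obtain ⟨r', hr'⟩ := strong s hτs hr
        exact h1 x (Or.inr hx) (r', q') (Or.inr (Or.inr ⟨Or.inl hi, Or.inr hx, hr', h⟩))
      · exact h1 x (Or.inr hx) (p, q')
          (Or.inr (Or.inl ⟨Or.inr hx, fun k => k.elim hi hxs, h, rfl⟩))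
  · rintro ⟨⟨h1, h2⟩, ⟨h3, h4⟩⟩
    refine ⟨?_, ?_⟩
    · rintro x hx p' (⟨a, b, c, d⟩ | ⟨a, b, c, d⟩ | ⟨a, b, c, d⟩)
      · rcases hx with hx | hx
        · exact h1 x hx _ c
        · exact b (Or.inr hx)
      · rcases hx with hx | hx
        · exact b (Or.inr hx)
        · exact h3 x hx _ c
      · rcases hx with hx | hx
        · exact h1 x hx _ c
        · exact h3 x hx _ d
    · rintro p' (⟨a, b⟩ | ⟨a, b⟩)
      · exact h2 _ a
      · exact h4 _ a

theorem St_D (hcomp : Composable s e) {X : Set Qs} {Y : Set Qe} (hok : OK s e X Y) :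
    St (par s e) (X ×ˢ Y) .delta = St s X .delta ×ˢ St e Y .delta := by
  ext ⟨a, b⟩
  constructor
  · rintro ⟨⟨p, q⟩, ⟨hp, hq⟩, ⟨p', q'⟩, ⟨h, hQ⟩, h'⟩
    obtain ⟨rfl, rfl⟩ := Prod.mk.inj h
    rw [quiet s e hcomp hok hp hq] at hQ
    rw [par_eps] at h'
    exact ⟨⟨p', hp, p', ⟨rfl, hQ.1⟩, h'.1⟩, ⟨q', hq, q', ⟨rfl, hQ.2⟩, h'.2⟩⟩
  · rintro ⟨⟨p, hp, p', ⟨rfl, h⟩, h'⟩, ⟨q, hq, q', ⟨rfl, k⟩, k'⟩⟩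
    exact ⟨(p', q'), ⟨hp, hq⟩, (p', q'), ⟨rfl, (quiet s e hcomp hok hp hq).2 ⟨h, k⟩⟩,
      (par_eps s e).2 ⟨h', k'⟩⟩

theorem mem_out (M : LTS Q Lab) {X : Set Q} {x : ELabel Lab} :
    x ∈ M.outSet X ↔ ∃ q ∈ X, x ∈ M.outq q := by
  simp [outSet]

theorem mem_in (M : LTS Q Lab) {X : Set Q} {ℓ : Lab} :
    ℓ ∈ M.inSet X ↔ ∀ q ∈ X, ℓ ∈ M.inq q := by
  simp [inSet]

theorem St_out (M : LTS Q Lab) {X : Set Q} {ℓ : Lab} (h : ℓ ∈ M.U) :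
    (St M X (.lab ℓ)).Nonempty ↔ .lab ℓ ∈ M.outSet X := by
  rw [mem_out]
  constructor
  · rintro ⟨q', q, hq, q2, h1, _⟩
    exact ⟨q, hq, h, q2, h1⟩
  · rintro ⟨q, hq, _, q', hq'⟩
    exact ⟨q', q, hq, q', hq', .refl⟩

theorem St_delta (M : LTS Q Lab) {X : Set Q} :
    (St M X .delta).Nonempty ↔ .delta ∈ M.outSet X := by
  rw [mem_out]
  constructor
  · rintro ⟨q', q, hq, q2, h1, _⟩
    exact ⟨q, hq, h1.2⟩
  · rintro ⟨q, hq, h⟩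
    exact ⟨q, q, hq, q, ⟨rfl, h⟩, .refl⟩

theorem St_in (M : LTS Q Lab) {X : Set Q} {ℓ : Lab} (hX : Cl M X) (hne : X.Nonempty)
    (h : ℓ ∈ M.inSet X) : (St M X (.lab ℓ)).Nonempty := by
  obtain ⟨q, hq⟩ := hne
  obtain ⟨-, q', hw⟩ := (mem_in M).1 h q hq
  rw [← afterSet_eq M hX]
  exact ⟨q', q, hq, hw⟩

theorem after_nil : (par s e).after [] = s.after [] ×ˢ e.after [] := by
  ext ⟨a, b⟩
  rw [Set.mem_prod]
  change (par s e).W (s.q0, e.q0) [] (a, b) ↔ s.W s.q0 [] a ∧ e.W e.q0 [] b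
  rw [W_nil, W_nil, W_nil, par_eps]

theorem OK_of {R : Set (Set Qs × Set Qe)} (hR : IsEcosim s e R) {X : Set Qs} {Y : Set Qe}
    (h : (X, Y) ∈ R) : OK s e X Y := by
  obtain ⟨ha, hb, -⟩ := hR.2 X Y h
  intro p hp q hq ℓ
  exact ⟨fun h1 h2 => (mem_in s).1 (ha ℓ ((mem_out e).2 ⟨q, hq, h1⟩) h2).1 p hp,
    fun h1 h2 => (mem_in e).1 (hb ℓ ((mem_out s).2 ⟨p, hp, h1⟩) h2).1 q hq⟩

theorem inv (hcomp : Composable s e) {R : Set (Set Qs × Set Qe)} (hR : IsEcosim s e R)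
    (σ : List (ELabel Lab)) (hσ : σ ∈ (par s e).Utraces) :
    ∃ X Y, (X, Y) ∈ R ∧ (par s e).after σ = X ×ˢ Y ∧ Cl s X ∧ Cl e Y := by
  induction σ using List.reverseRecOn with
  | nil => exact ⟨_, _, hR.1, after_nil s e, Cl_nil s, Cl_nil e⟩
  | append_singleton σ x ih =>
    rw [snoc_utrace] at hσ
    obtain ⟨hσ, hx, hne, hin⟩ := hσ
    obtain ⟨X, Y, hXY, hprod, hX, hY⟩ := ih hσ
    have hok := OK_of s e hR hXY
    obtain ⟨ha, hb, hc, hd, he, hf⟩ := hR.2 X Y hXY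
    rw [after_snoc]
    rw [hprod] at hne hin ⊢
    have hXYne : (X ×ˢ Y).Nonempty := by
      obtain ⟨_, p, hp, _⟩ := hne
      exact ⟨p, hp⟩
    obtain ⟨⟨p0, q0⟩, hp0, hq0⟩ := hXYne
    simp only [afterSet_eq s hX, afterSet_eq e hY] at ha hb hc hd he hf
    cases x with
    | delta =>
      rw [St_D s e hcomp hok] at hne ⊢
      exact ⟨_, _, hf ((St_delta s).1 hne.fst) ((St_delta e).1 hne.snd), rfl, Cl_St _ _ _,
        Cl_St _ _ _⟩
    | lab ℓ =>
      have hx' : ℓ ∈ s.L ∨ ℓ ∈ e.L := by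
        have : ℓ ∈ (par s e).L := hx
        simp only [LTS.L, par, Set.mem_union, Set.mem_sdiff] at this ⊢
        tauto
      by_cases h1 : ℓ ∈ s.L <;> by_cases h2 : ℓ ∈ e.L
      · rw [St_B s e h1 h2] at hne ⊢
        refine ⟨_, _, ?_, rfl, Cl_St _ _ _, Cl_St _ _ _⟩
        by_cases hsU : ℓ ∈ s.U
        · rcases h2 with h2 | h2
          · exact (hb ℓ ((St_out s hsU).1 hne.fst) h2).2
          · have : ℓ ∈ s.U ∩ e.U := ⟨hsU, h2⟩
            rw [hcomp] at this
            exact this.elim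
        have hsI : ℓ ∈ s.I := h1.resolve_right hsU
        by_cases heU : ℓ ∈ e.U
        · exact (ha ℓ ((St_out e heU).1 hne.snd) hsI).2
        have heI : ℓ ∈ e.I := h2.resolve_right heU
        have hin' := hin ℓ rfl (Or.inl ⟨hsI, heU⟩)
        refine he ℓ ((mem_in s).2 fun p hp => ?_) ((mem_in e).2 fun q hq => ?_)
        · exact ⟨hsI, ((wk_B s e h1 h2).1 (hin' (p, q0) ⟨hp, hq0⟩)).1⟩
        · exact ⟨heI, ((wk_B s e h1 h2).1 (hin' (p0, q) ⟨hp0, hq⟩)).2⟩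
      · rw [St_S s e h1 h2 hY] at hne ⊢
        refine ⟨_, _, ?_, rfl, Cl_St _ _ _, hY⟩
        refine hd ℓ ?_ h2
        by_cases hsU : ℓ ∈ s.U
        · exact Or.inl ((St_out s hsU).1 hne.fst)
        have hsI : ℓ ∈ s.I := h1.resolve_right hsU
        have hin' := hin ℓ rfl (Or.inl ⟨hsI, fun h => h2 (Or.inr h)⟩)
        exact Or.inr ((mem_in s).2 fun p hp =>
          ⟨hsI, (wk_S s e h1 h2).1 (hin' (p, q0) ⟨hp, hq0⟩)⟩)
      · rw [St_E s e h1 h2 hX] at hne ⊢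
        refine ⟨_, _, ?_, rfl, hX, Cl_St _ _ _⟩
        refine hc ℓ ?_ h1
        by_cases heU : ℓ ∈ e.U
        · exact Or.inl ((St_out e heU).1 hne.snd)
        have heI : ℓ ∈ e.I := h2.resolve_right heU
        have hin' := hin ℓ rfl (Or.inr ⟨heI, fun h => h1 (Or.inr h)⟩)
        exact Or.inr ((mem_in e).2 fun q hq =>
          ⟨heI, (wk_E s e h1 h2).1 (hin' (p0, q) ⟨hp0, hq⟩)⟩)
      · exact (hx'.elim h1 h2).elim

/-- Swapping the components of a parallel composition. -/
theorem swap_step {p p' : Qs × Qe} {a : Option Lab} :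
    (par e s).T p.swap a p'.swap ↔ (par s e).T p a p' := by
  cases a <;> simp [par] <;> tauto

theorem swap_L : (par e s).I = (par s e).I ∧ (par e s).U = (par s e).U :=
  ⟨Set.union_comm _ _, Set.union_comm _ _⟩

theorem swap_Q {p : Qs × Qe} : (par e s).Quiescent p.swap ↔ (par s e).Quiescent p := by
  unfold Quiescent
  rw [(swap_L s e).2]
  constructor
  · rintro ⟨h1, h2⟩
    exact ⟨fun x hx q' h => h1 x hx q'.swap ((swap_step s e).2 h),
      fun q' h => h2 q'.swap ((swap_step s e).2 h)⟩
  · rintro ⟨h1, h2⟩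
    exact ⟨fun x hx q' h => h1 x hx q'.swap ((swap_step e s).2 h),
      fun q' h => h2 q'.swap ((swap_step e s).2 h)⟩

theorem swap_W {p p' : Qs × Qe} {σ : List (ELabel Lab)} (h : (par s e).W p σ p') :
    (par e s).W p.swap σ p'.swap := by
  have heps : ∀ {p p' : Qs × Qe}, (par s e).Eps p p' → (par e s).Eps p.swap p'.swap := by
    intro p p' h
    rw [par_eps] at h ⊢
    exact ⟨h.2, h.1⟩
  induction h with
  | nil h => exact .nil (heps h)
  | @snoc q1 q2 q' σ x h1 h2 h3 ih =>
    refine .snoc (q2 := q2.swap) ih ?_ (heps h3)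
    cases x with
    | lab ℓ => exact (swap_step s e).2 h2
    | delta => exact ⟨congrArg _ h2.1, (swap_Q s e).2 h2.2⟩

theorem swap_U {σ : List (ELabel Lab)} (h : σ ∈ (par s e).Utraces) : σ ∈ (par e s).Utraces := by
  obtain ⟨h1, ⟨q, h2⟩, h3⟩ := h
  refine ⟨?_, ⟨_, swap_W s e h2⟩, ?_⟩
  · unfold LTS.L at h1 ⊢
    rw [(swap_L s e).1, (swap_L s e).2]
    exact h1
  · intro σ1 ℓ σ2 hσ hℓ q hq
    rw [(swap_L s e).1] at hℓ
    obtain ⟨q', hq'⟩ := h3 σ1 ℓ σ2 hσ hℓ q.swap (swap_W e s hq)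
    exact ⟨_, swap_W s e hq'⟩

/-- The relation of pairs reached by utraces. -/
def Rel : Set (Set Qs × Set Qe) :=
  {P | ∃ σ ∈ (par s e).Utraces, (par s e).after σ = P.1 ×ˢ P.2 ∧ Cl s P.1 ∧ Cl e P.2}

theorem Rel_ecosim (hs : Disjoint s.I s.U) (he : Disjoint e.I e.U)
    (hcomp : Composable s e) (hm : MutuallyAccepts s e) : IsEcosim s e (Rel s e) := by
  refine ⟨⟨[], nil_utrace _, after_nil s e, Cl_nil s, Cl_nil e⟩, ?_⟩
  rintro X Y ⟨σ, hσ, hprod, hX, hY⟩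
  dsimp only at hprod hX hY
  have hne : (X ×ˢ Y).Nonempty := by
    rw [← hprod]
    exact hσ.2.1
  have hXn := hne.fst
  have hYn := hne.snd
  have hok : OK s e X Y := by
    intro p hp q hq ℓ
    have hpq : (p, q) ∈ (par s e).after σ := by
      rw [hprod]
      exact ⟨hp, hq⟩
    exact ⟨hm.1 σ hσ p q hpq ℓ, hm.2 σ (swap_U s e hσ) q p (swap_W s e hpq) ℓ⟩
  have hsd : ∀ {ℓ}, ℓ ∈ s.I → ℓ ∈ s.U → False := fun h h' => Set.disjoint_left.1 hs h h'
  have hed : ∀ {ℓ}, ℓ ∈ e.I → ℓ ∈ e.U → False := fun h h' => Set.disjoint_left.1 he h h'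
  have key : ∀ (x : ELabel Lab) (X' : Set Qs) (Y' : Set Qe),
      St (par s e) (X ×ˢ Y) x = X' ×ˢ Y' → X'.Nonempty → Y'.Nonempty → Cl s X' → Cl e Y' →
      ELabel.inL (par s e).L x →
      (∀ ℓ, x = .lab ℓ → ℓ ∈ (par s e).I → ∀ q ∈ X ×ˢ Y, ∃ q', (par s e).W q [.lab ℓ] q') →
      (X', Y') ∈ Rel s e := by
    intro x X' Y' h1 h2 h3 h4 h5 h6 h7
    refine ⟨σ ++ [x], (snoc_utrace _).2 ⟨hσ, h6, ?_, ?_⟩, ?_, h4, h5⟩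
    · rw [hprod, h1]
      exact h2.prod h3
    · rw [hprod]
      exact h7
    · rw [after_snoc, hprod, h1]
  have hLU : ∀ {ℓ}, ℓ ∈ s.L ∨ ℓ ∈ e.L → ELabel.inL (par s e).L (.lab ℓ) := by
    intro ℓ h
    change ℓ ∈ (par s e).L
    simp only [LTS.L, par, Set.mem_union, Set.mem_sdiff] at h ⊢
    tauto
  have noI : ∀ {ℓ}, ℓ ∈ s.U ∨ ℓ ∈ e.U → ℓ ∉ (par s e).I := by
    rintro ℓ (h | h) (⟨h1, h2⟩ | ⟨h1, h2⟩)
    · exact hsd h1 h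
    · exact h2 h
    · exact h2 h
    · exact hed h1 h
  simp only [afterSet_eq s hX, afterSet_eq e hY]
  refine ⟨?_, ?_, ?_, ?_, ?_, ?_⟩
  · intro ℓ h hI
    obtain ⟨q, hq, hqo⟩ := (mem_out e).1 h
    have hin : ℓ ∈ s.inSet X := (mem_in s).2 fun p hp => (hok p hp q hq ℓ).1 hqo hI
    refine ⟨hin, key (.lab ℓ) _ _ (St_B s e (Or.inl hI) (Or.inr hqo.1)) (St_in s hX hXn hin)
      ((St_out e hqo.1).2 h) (Cl_St _ _ _) (Cl_St _ _ _) (hLU (Or.inl (Or.inl hI))) ?_⟩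
    rintro _ ⟨⟩ hi
    exact absurd hi (noI (Or.inr hqo.1))
  · intro ℓ h hI
    obtain ⟨p, hp, hpo⟩ := (mem_out s).1 h
    have hin : ℓ ∈ e.inSet Y := (mem_in e).2 fun q hq => (hok p hp q hq ℓ).2 hpo hI
    refine ⟨hin, key (.lab ℓ) _ _ (St_B s e (Or.inr hpo.1) (Or.inl hI))
      ((St_out s hpo.1).2 h) (St_in e hY hYn hin) (Cl_St _ _ _) (Cl_St _ _ _)
      (hLU (Or.inr (Or.inl hI))) ?_⟩
    rintro _ ⟨⟩ hi
    exact absurd hi (noI (Or.inl hpo.1))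
  · rintro ℓ (h | h) hL
    · obtain ⟨q, hq, hqo⟩ := (mem_out e).1 h
      refine key (.lab ℓ) _ _ (St_E s e hL (Or.inr hqo.1) hX) hXn ((St_out e hqo.1).2 h) hX
        (Cl_St _ _ _) (hLU (Or.inr (Or.inr hqo.1))) ?_
      rintro _ ⟨⟩ hi
      exact absurd hi (noI (Or.inr hqo.1))
    · have hi := (mem_in e).1 h
      have hI : ℓ ∈ e.L := Or.inl (hi _ hYn.some_mem).1
      refine key (.lab ℓ) _ _ (St_E s e hL hI hX) hXn (St_in e hY hYn h) hX
        (Cl_St _ _ _) (hLU (Or.inr hI)) ?_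
      rintro _ ⟨⟩ - ⟨p, q⟩ ⟨hp, hq⟩
      exact (wk_E s e hL hI).2 (hi q hq).2
  · rintro ℓ (h | h) hL
    · obtain ⟨q, hq, hqo⟩ := (mem_out s).1 h
      refine key (.lab ℓ) _ _ (St_S s e (Or.inr hqo.1) hL hY) ((St_out s hqo.1).2 h) hYn
        (Cl_St _ _ _) hY (hLU (Or.inl (Or.inr hqo.1))) ?_
      rintro _ ⟨⟩ hi
      exact absurd hi (noI (Or.inl hqo.1))
    · have hi := (mem_in s).1 h
      have hI : ℓ ∈ s.L := Or.inl (hi _ hXn.some_mem).1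
      refine key (.lab ℓ) _ _ (St_S s e hI hL hY) (St_in s hX hXn h) hYn
        (Cl_St _ _ _) hY (hLU (Or.inl hI)) ?_
      rintro _ ⟨⟩ - ⟨p, q⟩ ⟨hp, hq⟩
      exact (wk_S s e hI hL).2 (hi p hp).2
  · intro ℓ h k
    have hi := (mem_in s).1 h
    have ki := (mem_in e).1 k
    have hI : ℓ ∈ s.L := Or.inl (hi _ hXn.some_mem).1
    have kI : ℓ ∈ e.L := Or.inl (ki _ hYn.some_mem).1
    refine key (.lab ℓ) _ _ (St_B s e hI kI) (St_in s hX hXn h) (St_in e hY hYn k)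
      (Cl_St _ _ _) (Cl_St _ _ _) (hLU (Or.inl hI)) ?_
    rintro _ ⟨⟩ - ⟨p, q⟩ ⟨hp, hq⟩
    exact (wk_B s e hI kI).2 ⟨(hi p hp).2, (ki q hq).2⟩
  · intro h k
    refine key .delta _ _ (St_D s e hcomp hok) ((St_delta s).2 h) ((St_delta e).2 k)
      (Cl_St _ _ _) (Cl_St _ _ _) trivial ?_
    rintro _ ⟨⟩

end EcoAux

/-- for composable `s`, `e`, `s eco e` iff `s` mutually
accepts `e`. -/
theorem eco_iff_mutually_accepts {Qs Qe Lab : Type}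
    (s : LTS Qs Lab) (e : LTS Qe Lab)
    (hs : s.WellFormed) (he : e.WellFormed)
    (hcomp : Composable s e) :
    Eco s e ↔ MutuallyAccepts s e := by
  constructor
  · rintro ⟨R, hR⟩
    refine ⟨?_, ?_⟩
    · intro σ hσ p q h
      obtain ⟨X, Y, hXY, hprod, -, -⟩ := EcoAux.inv s e hcomp hR σ hσ
      have hpq : (p, q) ∈ (par s e).after σ := h
      rw [hprod] at hpq
      exact fun ℓ => (EcoAux.OK_of s e hR hXY p hpq.1 q hpq.2 ℓ).1
    · intro σ hσ q p h
      obtain ⟨X, Y, hXY, hprod, -, -⟩ := EcoAux.inv s e hcomp hR σ (EcoAux.swap_U e s hσ)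
      have hpq : (p, q) ∈ (par s e).after σ := EcoAux.swap_W e s h
      rw [hprod] at hpq
      exact fun ℓ => (EcoAux.OK_of s e hR hXY p hpq.1 q hpq.2 ℓ).2
  · intro hm
    exact ⟨_, EcoAux.Rel_ecosim s e hs.2.2.1 he.2.2.1 hcomp hm⟩
end

section
/- Let s and e be composable labelled transition systems with s eco e, let σ ∈ Utraces(s ∥ e), and let q_s ∈ Q_s, q_e ∈ Q_e. Then s ∥ e ==σ==> q_s ∥ q_e if and only if s ==σ↾L_s^δ==> q_s and e ==σ↾L_e^δ==> q_e. -/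
theorem aux_W_snoc {Q Lab : Type} {M : LTS Q Lab} {q q' : Q} {σ : List (ELabel Lab)}
    {x : ELabel Lab} :
    M.W q (σ ++ [x]) q' ↔ ∃ q1 q2, M.W q σ q1 ∧ M.VStep q1 x q2 ∧ M.Eps q2 q' := by
  constructor
  · intro h
    generalize hρ : σ ++ [x] = ρ at h
    cases h with
    | nil h => simp at hρ
    | snoc h1 h2 h3 =>
      obtain ⟨rfl, h⟩ := List.append_inj' hρ rfl
      cases h
      exact ⟨_, _, h1, h2, h3⟩
  · rintro ⟨q1, q2, h1, h2, h3⟩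
    exact .snoc h1 h2 h3

theorem aux_W_nil {Q Lab : Type} {M : LTS Q Lab} {q q' : Q} :
    M.W q [] q' ↔ M.Eps q q' := by
  constructor
  · intro h
    generalize hρ : [] = ρ at h
    cases h with
    | nil h => exact h
    | snoc h1 h2 h3 => simp at hρ
  · exact .nil

theorem aux_W_one {Q Lab : Type} {M : LTS Q Lab} {q q' : Q} {x : ELabel Lab} :
    M.W q [x] q' ↔ ∃ q1 q2, M.Eps q q1 ∧ M.VStep q1 x q2 ∧ M.Eps q2 q' := by
  have := aux_W_snoc (M := M) (q := q) (q' := q') (σ := []) (x := x)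
  simpa [aux_W_nil] using this

theorem aux_W_eps {Q Lab : Type} {M : LTS Q Lab} {q q1 q' : Q} {σ : List (ELabel Lab)}
    (h : M.W q σ q1) (h' : M.Eps q1 q') : M.W q σ q' := by
  cases h with
  | nil h => exact .nil (Relation.ReflTransGen.trans h h')
  | snoc h1 h2 h3 => exact .snoc h1 h2 (Relation.ReflTransGen.trans h3 h')

theorem aux_after {Q Lab : Type} (M : LTS Q Lab) (σ : List (ELabel Lab)) (x : ELabel Lab) :
    M.afterSet (M.after σ) [x] = M.after (σ ++ [x]) := by
  ext q
  simp only [LTS.afterSet, LTS.after, Set.mem_setOf_eq, aux_W_one, aux_W_snoc]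
  constructor
  · rintro ⟨q0, h0, q1, q2, h1, h2, h3⟩
    exact ⟨q1, q2, aux_W_eps h0 h1, h2, h3⟩
  · rintro ⟨q1, q2, h1, h2, h3⟩
    exact ⟨q1, h1, q1, q2, .refl, h2, h3⟩

theorem aux_eps {Qs Qe Lab : Type} {s : LTS Qs Lab} {e : LTS Qe Lab} {p p' : Qs × Qe} :
    (par s e).Eps p p' ↔ s.Eps p.1 p'.1 ∧ e.Eps p.2 p'.2 := by
  constructor
  · intro h
    induction h with
    | refl => exact ⟨.refl, .refl⟩
    | tail _ h ih =>
      obtain ⟨i1, i2⟩ := ih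
      rcases h with ⟨h, h'⟩ | ⟨h, h'⟩
      · rw [h']; exact ⟨i1.tail h, i2⟩
      · rw [h']; exact ⟨i1, i2.tail h⟩
  · obtain ⟨a, b⟩ := p
    obtain ⟨c, d⟩ := p'
    rintro ⟨h1, h2⟩
    have A : (par s e).Eps (a, b) (c, b) := by
      dsimp at h1
      clear h2
      induction h1 with
      | refl => exact .refl
      | tail _ h ih => exact ih.tail (Or.inl ⟨h, rfl⟩)
    refine Relation.ReflTransGen.trans A ?_
    dsimp at h2
    clear h1 A
    induction h2 with
    | refl => exact .refl
    | tail _ h ih => exact ih.tail (Or.inr ⟨h, rfl⟩)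

theorem aux_out {Q Lab : Type} {M : LTS Q Lab} {X : Set Q} {x : ELabel Lab} :
    x ∈ M.outSet X ↔ ∃ q ∈ X, M.outLabel q x := by
  simp [LTS.outSet, LTS.outq]

theorem aux_in {Q Lab : Type} {M : LTS Q Lab} {X : Set Q} {ℓ : Lab} :
    ℓ ∈ M.inSet X ↔ ∀ q ∈ X, ℓ ∈ M.I ∧ ∃ q', M.W q [ELabel.lab ℓ] q' := by
  simp [LTS.inSet, LTS.inq]

theorem aux_proj {Lab : Type} {Ls : Set Lab} {σ : List (ELabel Lab)} {x : ELabel Lab}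
    (h : ELabel.inL Ls x) : projD (σ ++ [x]) Ls = projD σ Ls ++ [x] := by
  simp [projD, List.filter_append, h]

theorem aux_proj' {Lab : Type} {Ls : Set Lab} {σ : List (ELabel Lab)} {x : ELabel Lab}
    (h : ¬ ELabel.inL Ls x) : projD (σ ++ [x]) Ls = projD σ Ls := by
  simp [projD, List.filter_append, h]

theorem aux_utr {Q Lab : Type} {M : LTS Q Lab} {σ : List (ELabel Lab)} {x : ELabel Lab}
    (h : σ ++ [x] ∈ M.Utraces) : σ ∈ M.Utraces := by
  obtain ⟨h1, ⟨q', h2⟩, h3⟩ := h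
  obtain ⟨q1, q2, h2, -, -⟩ := aux_W_snoc.1 h2
  refine ⟨fun y hy => h1 y (by simp [hy]), ⟨q1, h2⟩, ?_⟩
  intro σ1 ℓ σ2 hσ
  exact h3 σ1 ℓ (σ2 ++ [x]) (by simp [hσ])

theorem aux_notau {Q Lab : Type} {M : LTS Q Lab} {q q' : Q} {ℓ : Lab}
    (h : ∀ q', ¬ M.T q none q') (hw : M.W q [ELabel.lab ℓ] q') : ∃ q', M.T q (some ℓ) q' := by
  obtain ⟨q1, q2, h1, h2, -⟩ := aux_W_one.1 hw
  rcases Relation.ReflTransGen.cases_head h1 with rfl | ⟨c, hc, -⟩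
  · exact ⟨_, h2⟩
  · exact absurd hc (h c)

theorem aux_main {Qs Qe Lab : Type}
    (s : LTS Qs Lab) (e : LTS Qe Lab)
    (hs : s.WellFormed) (he : e.WellFormed)
    (hcomp : Composable s e) (R : Set (Set Qs × Set Qe)) (hR : IsEcosim s e R)
    (σ : List (ELabel Lab)) (hσ : σ ∈ (par s e).Utraces) :
    (s.after (projD σ s.L), e.after (projD σ e.L)) ∈ R ∧
    ∀ qs qe, (par s e).W (par s e).q0 σ (qs, qe) ↔
      s.W s.q0 (projD σ s.L) qs ∧ e.W e.q0 (projD σ e.L) qe := by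
  induction σ using List.reverseRecOn with
  | nil =>
    refine ⟨hR.1, fun qs qe => ?_⟩
    simp only [projD, List.filter_nil, aux_W_nil]
    exact aux_eps
  | append_singleton σ x ih =>
    obtain ⟨ihR, ih⟩ := ih (aux_utr hσ)
    obtain ⟨-, -, hsd, hsT, -, -⟩ := hs
    obtain ⟨-, -, hed, heT, -, -⟩ := he
    obtain ⟨ha, hb, hc, hd, hee, hf⟩ := hR.2 _ _ ihR
    obtain ⟨hin, ⟨⟨rs, re⟩, hrun⟩, hU⟩ := hσ
    obtain ⟨⟨as, ae⟩, ⟨bs, be⟩, hr1, hr2, -⟩ := aux_W_snoc.1 hrun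
    obtain ⟨has, hae⟩ := (ih _ _).1 hr1
    have hdisj : ∀ ℓ, ℓ ∈ s.U → ℓ ∈ e.U → False := fun ℓ h1 h2 => by
      have : ℓ ∈ s.U ∩ e.U := ⟨h1, h2⟩
      rw [hcomp] at this; exact this
    have hsd' : ∀ ℓ, ℓ ∈ s.I → ℓ ∈ s.U → False := fun ℓ h1 h2 =>
      Set.disjoint_left.1 hsd h1 h2
    have hed' : ∀ ℓ, ℓ ∈ e.I → ℓ ∈ e.U → False := fun ℓ h1 h2 =>
      Set.disjoint_left.1 hed h1 h2
    cases x with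
    | delta =>
      have hsδ : projD (σ ++ [ELabel.delta]) s.L = projD σ s.L ++ [ELabel.delta] :=
        aux_proj trivial
      have heδ : projD (σ ++ [ELabel.delta]) e.L = projD σ e.L ++ [ELabel.delta] :=
        aux_proj trivial
      have key : ∀ as ae, s.W s.q0 (projD σ s.L) as → e.W e.q0 (projD σ e.L) ae →
          (par s e).Quiescent (as, ae) → s.Quiescent as ∧ e.Quiescent ae := by
        intro as ae has hae hq
        have ts : ∀ q', ¬ s.T as none q' := fun q' h => hq.2 (q', ae) (Or.inl ⟨h, rfl⟩)
        have te : ∀ q', ¬ e.T ae none q' := fun q' h => hq.2 (as, q') (Or.inr ⟨h, rfl⟩)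
        refine ⟨⟨fun x hx q' h => ?_, ts⟩, ⟨fun x hx q' h => ?_, te⟩⟩
        · by_cases hxe : x ∈ e.L
          · have hxI : x ∈ e.I := hxe.resolve_right (hdisj x hx)
            obtain ⟨h1, -⟩ := hb x (aux_out.2 ⟨as, has, hx, q', h⟩) hxI
            obtain ⟨-, q2, h2⟩ := aux_in.1 h1 ae hae
            obtain ⟨q3, h3⟩ := aux_notau te h2
            exact hq.1 x (Or.inl hx) (q', q3) (Or.inr (Or.inr ⟨Or.inr hx, hxe, h, h3⟩))
          · exact hq.1 x (Or.inl hx) (q', ae) (Or.inl ⟨Or.inr hx, hxe, h, rfl⟩)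
        · by_cases hxs : x ∈ s.L
          · have hxI : x ∈ s.I := hxs.resolve_right (fun h => hdisj x h hx)
            obtain ⟨h1, -⟩ := ha x (aux_out.2 ⟨ae, hae, hx, q', h⟩) hxI
            obtain ⟨-, q2, h2⟩ := aux_in.1 h1 as has
            obtain ⟨q3, h3⟩ := aux_notau ts h2
            exact hq.1 x (Or.inr hx) (q3, q') (Or.inr (Or.inr ⟨hxs, Or.inr hx, h3, h⟩))
          · exact hq.1 x (Or.inr hx) (as, q') (Or.inr (Or.inl ⟨Or.inr hx, hxs, h, rfl⟩))
      rw [hsδ, heδ]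
      constructor
      · rw [← aux_after, ← aux_after]
        obtain ⟨k1, k2⟩ := key as ae has hae hr2.2
        exact hf (aux_out.2 ⟨as, has, k1⟩) (aux_out.2 ⟨ae, hae, k2⟩)
      · intro qs qe
        constructor
        · intro h
          obtain ⟨⟨p1, p2⟩, p', h1, ⟨rfl, h2⟩, h3⟩ := aux_W_snoc.1 h
          obtain ⟨i1, i2⟩ := (ih _ _).1 h1
          obtain ⟨k1, k2⟩ := key p1 p2 i1 i2 h2
          obtain ⟨e1, e2⟩ := aux_eps.1 h3
          exact ⟨.snoc i1 ⟨rfl, k1⟩ e1, .snoc i2 ⟨rfl, k2⟩ e2⟩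
        · rintro ⟨h1, h2⟩
          obtain ⟨q1, _, h1, ⟨rfl, k1⟩, e1⟩ := aux_W_snoc.1 h1
          obtain ⟨q2, _, h2, ⟨rfl, k2⟩, e2⟩ := aux_W_snoc.1 h2
          refine .snoc (q2 := (_, _)) ((ih _ _).2 ⟨h1, h2⟩) ⟨rfl, ?_, ?_⟩ (aux_eps.2 ⟨e1, e2⟩)
          · rintro x hx ⟨a, b⟩ (⟨g1, g2, g3, g4⟩ | ⟨g1, g2, g3, g4⟩ | ⟨g1, g2, g3, g4⟩)
            · exact k1.1 x (hx.resolve_right fun h => g2 (Or.inr h)) _ g3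
            · exact k2.1 x (hx.resolve_left fun h => g2 (Or.inr h)) _ g3
            · exact hx.elim (fun h => k1.1 x h _ g3) (fun h => k2.1 x h _ g4)
          · rintro ⟨a, b⟩ (⟨g1, g2⟩ | ⟨g1, g2⟩)
            · exact k1.2 _ g1
            · exact k2.2 _ g1
    | lab ℓ =>
      have hUℓ := hU σ ℓ [] rfl
      have wpar : ∀ p, (∃ p', (par s e).W p [ELabel.lab ℓ] p') →
          (ℓ ∈ s.L → ∃ q, s.W p.1 [ELabel.lab ℓ] q) ∧
          (ℓ ∈ e.L → ∃ q, e.W p.2 [ELabel.lab ℓ] q) := by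
        rintro p ⟨p', hp⟩
        obtain ⟨p1, p2, h1, h2, h3⟩ := aux_W_one.1 hp
        obtain ⟨e1, e2⟩ := aux_eps.1 h1
        obtain ⟨f1, f2⟩ := aux_eps.1 h3
        constructor
        · intro hl
          rcases h2 with ⟨g1, g2, g3, g4⟩ | ⟨g1, g2, g3, g4⟩ | ⟨g1, g2, g3, g4⟩
          · exact ⟨_, aux_W_one.2 ⟨_, _, e1, g3, f1⟩⟩
          · exact absurd hl g2
          · exact ⟨_, aux_W_one.2 ⟨_, _, e1, g3, f1⟩⟩
        · intro hl
          rcases h2 with ⟨g1, g2, g3, g4⟩ | ⟨g1, g2, g3, g4⟩ | ⟨g1, g2, g3, g4⟩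
          · exact absurd hl g2
          · exact ⟨_, aux_W_one.2 ⟨_, _, e2, g3, f2⟩⟩
          · exact ⟨_, aux_W_one.2 ⟨_, _, e2, g4, f2⟩⟩
      have insS : ℓ ∈ s.I → ℓ ∉ e.U → ℓ ∈ s.inSet (s.after (projD σ s.L)) := by
        intro h1 h2
        refine aux_in.2 fun q hq => ⟨h1, ?_⟩
        exact (wpar (q, ae) (hUℓ (Or.inl ⟨h1, h2⟩) _ ((ih _ _).2 ⟨hq, hae⟩))).1 (Or.inl h1)
      have insE : ℓ ∈ e.I → ℓ ∉ s.U → ℓ ∈ e.inSet (e.after (projD σ e.L)) := by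
        intro h1 h2
        refine aux_in.2 fun q hq => ⟨h1, ?_⟩
        exact (wpar (as, q) (hUℓ (Or.inr ⟨h1, h2⟩) _ ((ih _ _).2 ⟨has, hq⟩))).2 (Or.inl h1)
      rcases hr2 with ⟨g1, g2, g3, g4⟩ | ⟨g1, g2, g3, g4⟩ | ⟨g1, g2, g3, g4⟩
      · rw [aux_proj (x := .lab ℓ) g1, aux_proj' (x := .lab ℓ) g2]
        constructor
        · rw [← aux_after]
          refine hd ℓ ?_ g2
          rcases g1 with h | h
          · exact Or.inr (insS h fun h' => g2 (Or.inr h'))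
          · exact Or.inl (aux_out.2 ⟨as, has, h, _, g3⟩)
        · intro qs qe
          constructor
          · intro h
            obtain ⟨⟨p1, p2⟩, ⟨p3, p4⟩, h1, h2, h3⟩ := aux_W_snoc.1 h
            obtain ⟨i1, i2⟩ := (ih _ _).1 h1
            obtain ⟨e1, e2⟩ := aux_eps.1 h3
            rcases h2 with ⟨-, -, k1, k2⟩ | ⟨k, -⟩ | ⟨-, k, -⟩
            · dsimp at k2 e2
              subst k2
              exact ⟨.snoc i1 k1 e1, aux_W_eps i2 e2⟩
            · exact absurd k g2
            · exact absurd k g2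
          · rintro ⟨h1, h2⟩
            obtain ⟨q1, q2, h1, k1, e1⟩ := aux_W_snoc.1 h1
            exact .snoc (q2 := (q2, qe)) ((ih _ _).2 ⟨h1, h2⟩) (Or.inl ⟨g1, g2, k1, rfl⟩)
              (aux_eps.2 ⟨e1, .refl⟩)
      · rw [aux_proj (x := .lab ℓ) g1, aux_proj' (x := .lab ℓ) g2]
        constructor
        · rw [← aux_after]
          refine hc ℓ ?_ g2
          rcases g1 with h | h
          · exact Or.inr (insE h fun h' => g2 (Or.inr h'))
          · exact Or.inl (aux_out.2 ⟨ae, hae, h, _, g3⟩)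
        · intro qs qe
          constructor
          · intro h
            obtain ⟨⟨p1, p2⟩, ⟨p3, p4⟩, h1, h2, h3⟩ := aux_W_snoc.1 h
            obtain ⟨i1, i2⟩ := (ih _ _).1 h1
            obtain ⟨e1, e2⟩ := aux_eps.1 h3
            rcases h2 with ⟨k, -⟩ | ⟨-, -, k1, k2⟩ | ⟨k, -⟩
            · exact absurd k g2
            · dsimp at k2 e1
              subst k2
              exact ⟨aux_W_eps i1 e1, .snoc i2 k1 e2⟩
            · exact absurd k g2
          · rintro ⟨h1, h2⟩
            obtain ⟨q1, q2, h2, k1, e1⟩ := aux_W_snoc.1 h2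
            exact .snoc (q2 := (qs, q2)) ((ih _ _).2 ⟨h1, h2⟩)
              (Or.inr (Or.inl ⟨g1, g2, k1, rfl⟩)) (aux_eps.2 ⟨.refl, e1⟩)
      · rw [aux_proj (x := .lab ℓ) g1, aux_proj (x := .lab ℓ) g2]
        constructor
        · rw [← aux_after, ← aux_after]
          rcases g1 with h | h
          · rcases g2 with h' | h'
            · exact hee ℓ (insS h (hed' ℓ h')) (insE h' (hsd' ℓ h))
            · exact (ha ℓ (aux_out.2 ⟨ae, hae, h', _, g4⟩) h).2
          · exact (hb ℓ (aux_out.2 ⟨as, has, h, _, g3⟩) (g2.resolve_right (hdisj ℓ h))).2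
        · intro qs qe
          constructor
          · intro h
            obtain ⟨⟨p1, p2⟩, ⟨p3, p4⟩, h1, h2, h3⟩ := aux_W_snoc.1 h
            obtain ⟨i1, i2⟩ := (ih _ _).1 h1
            obtain ⟨e1, e2⟩ := aux_eps.1 h3
            rcases h2 with ⟨-, k, -⟩ | ⟨-, k, -⟩ | ⟨-, -, k1, k2⟩
            · exact absurd g2 k
            · exact absurd g1 k
            · exact ⟨.snoc i1 k1 e1, .snoc i2 k2 e2⟩
          · rintro ⟨h1, h2⟩
            obtain ⟨q1, q2, h1, k1, e1⟩ := aux_W_snoc.1 h1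
            obtain ⟨q3, q4, h2, k2, e2⟩ := aux_W_snoc.1 h2
            exact .snoc (q2 := (q2, q4)) ((ih _ _).2 ⟨h1, h2⟩)
              (Or.inr (Or.inr ⟨g1, g2, k1, k2⟩)) (aux_eps.2 ⟨e1, e2⟩)

/-- for composable `s`, `e` with `s eco e` and a utrace `σ` of
`s ∥ e`:  `s ∥ e ==σ==> q_s ∥ q_e` iff `s ==σ↾L_s^δ==> q_s` and
`e ==σ↾L_e^δ==> q_e`. -/
theorem project_from_parcomp_eco {Qs Qe Lab : Type}
    (s : LTS Qs Lab) (e : LTS Qe Lab)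
    (hs : s.WellFormed) (he : e.WellFormed)
    (hcomp : Composable s e) (heco : Eco s e)
    (σ : List (ELabel Lab)) (hσ : σ ∈ (par s e).Utraces)
    (qs : Qs) (qe : Qe) :
    (par s e).W (par s e).q0 σ (qs, qe) ↔
      s.W s.q0 (projD σ s.L) qs ∧ e.W e.q0 (projD σ e.L) qe := by
  obtain ⟨R, hR⟩ := heco
  exact (aux_main s e hs he hcomp R hR σ hσ).2 qs qe
end

section
/- Let s and e be composable labelled transition systems with s eco e, and let q_s ∈ Q_s, q_e ∈ Q_e. Then there exists (X_s, X_e) ∈ R_U(s,e) with q_s ∈ X_s and q_e ∈ X_e if and only if there exists σ ∈ Utraces(s ∥ e) with s ∥ e ==σ==> q_s ∥ q_e. -/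
namespace LTS
variable {Q Lab : Type}

theorem W_nil_iff_s10 (M : LTS Q Lab) {q q' : Q} : M.W q [] q' ↔ M.Eps q q' := by
  constructor
  · intro h
    generalize hσ : ([] : List (ELabel Lab)) = σ at h
    cases h with
    | nil h => exact h
    | snoc _ _ _ => simp at hσ
  · exact W.nil

theorem W_snoc_iff_s10 (M : LTS Q Lab) {q q' : Q} {σ : List (ELabel Lab)} {x : ELabel Lab} :
    M.W q (σ ++ [x]) q' ↔ ∃ q1 q2, M.W q σ q1 ∧ M.VStep q1 x q2 ∧ M.Eps q2 q' := by
  constructor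
  · intro h
    generalize hσ : σ ++ [x] = σ' at h
    cases h with
    | nil h => simp at hσ
    | snoc h1 h2 h3 =>
      obtain ⟨rfl, h⟩ := List.append_inj' hσ rfl
      simp only [List.cons.injEq, and_true] at h
      subst h
      exact ⟨_, _, h1, h2, h3⟩
  · rintro ⟨q1, q2, h1, h2, h3⟩
    exact W.snoc h1 h2 h3

theorem W_one_iff (M : LTS Q Lab) {q q' : Q} {x : ELabel Lab} :
    M.W q [x] q' ↔ ∃ q1 q2, M.Eps q q1 ∧ M.VStep q1 x q2 ∧ M.Eps q2 q' := by
  have := M.W_snoc_iff_s10 (q := q) (q' := q') (σ := []) (x := x)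
  simpa only [List.nil_append, W_nil_iff_s10] using this

theorem W_eps_s10 (M : LTS Q Lab) {q q1 q' : Q} {σ : List (ELabel Lab)}
    (h : M.W q σ q1) (h2 : M.Eps q1 q') : M.W q σ q' := by
  cases h with
  | nil h => exact W.nil (Relation.ReflTransGen.trans h h2)
  | snoc a b c => exact W.snoc a b (Relation.ReflTransGen.trans c h2)

theorem W_snoc_iff' (M : LTS Q Lab) {q q' : Q} {σ : List (ELabel Lab)} {x : ELabel Lab} :
    M.W q (σ ++ [x]) q' ↔ ∃ r, M.W q σ r ∧ M.W r [x] q' := by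
  rw [W_snoc_iff_s10]
  constructor
  · rintro ⟨q1, q2, h1, h2, h3⟩
    exact ⟨q1, h1, M.W_one_iff.2 ⟨q1, q2, Relation.ReflTransGen.refl, h2, h3⟩⟩
  · rintro ⟨r, h1, h⟩
    obtain ⟨q1, q2, h2, h3, h4⟩ := M.W_one_iff.1 h
    exact ⟨q1, q2, M.W_eps_s10 h1 h2, h3, h4⟩

theorem Utraces_snoc_iff (M : LTS Q Lab) {σ : List (ELabel Lab)} {x : ELabel Lab} :
    σ ++ [x] ∈ M.Utraces ↔ σ ∈ M.Utraces ∧ ELabel.inL M.L x ∧ (∃ p, M.W M.q0 (σ ++ [x]) p) ∧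
      ∀ ℓ, x = .lab ℓ → ℓ ∈ M.I → ∀ q, M.W M.q0 σ q → ∃ q', M.W q [ELabel.lab ℓ] q' := by
  constructor
  · rintro ⟨h1, h2, h3⟩
    refine ⟨⟨fun y hy => h1 y (by simp [hy]), ?_, ?_⟩, h1 x (by simp), h2, ?_⟩
    · obtain ⟨p, hp⟩ := h2
      obtain ⟨r, hr, _⟩ := M.W_snoc_iff'.1 hp
      exact ⟨r, hr⟩
    · intro σ1 ℓ σ2 e
      exact h3 σ1 ℓ (σ2 ++ [x]) (by simp [e])
    · rintro ℓ rfl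
      exact h3 σ ℓ [] rfl
  · rintro ⟨⟨h1, h2, h3⟩, h4, h5, h6⟩
    refine ⟨?_, h5, ?_⟩
    · intro y hy
      rcases List.mem_append.1 hy with h | h
      · exact h1 y h
      · rw [List.mem_singleton.1 h]; exact h4
    · intro σ1 ℓ σ2 e
      rcases List.eq_nil_or_concat σ2 with rfl | ⟨σ3, y, rfl⟩
      · obtain ⟨rfl, h⟩ := List.append_inj' e rfl
        exact h6 ℓ (by simpa using h)
      · have e' : σ ++ [x] = (σ1 ++ ELabel.lab ℓ :: σ3) ++ [y] := by simpa using e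
        exact h3 σ1 ℓ σ3 (List.append_inj' e' rfl).1

/-- closed under internal steps -/
def TClosed (M : LTS Q Lab) (X : Set Q) : Prop := ∀ q ∈ X, ∀ q', M.Eps q q' → q' ∈ X

theorem afterSet_closed (M : LTS Q Lab) (X : Set Q) (σ) : M.TClosed (M.afterSet X σ) := by
  rintro q ⟨r, hr, h⟩ q' hq
  exact ⟨r, hr, M.W_eps_s10 h hq⟩

theorem after_closed (M : LTS Q Lab) (σ) : M.TClosed (M.after σ) := by
  intro q h q' hq
  exact M.W_eps_s10 h hq

end LTS

section
variable {Qs Qe Lab : Type} (s : LTS Qs Lab) (e : LTS Qe Lab)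

theorem par_eps {p p' : Qs × Qe} :
    (par s e).Eps p p' ↔ s.Eps p.1 p'.1 ∧ e.Eps p.2 p'.2 := by
  constructor
  · intro h
    induction h with
    | refl => exact ⟨.refl, .refl⟩
    | tail _ h ih =>
      rcases h with ⟨h, h'⟩ | ⟨h, h'⟩
      · rw [h']; exact ⟨ih.1.tail h, ih.2⟩
      · rw [h']; exact ⟨ih.1, ih.2.tail h⟩
  · obtain ⟨a, b⟩ := p
    obtain ⟨a', b'⟩ := p'
    rintro ⟨h1, h2⟩
    have H1 : (par s e).Eps (a, b) (a', b) :=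
      Relation.ReflTransGen.lift (fun x => (x, b)) (fun x y h => Or.inl ⟨h, rfl⟩) _ _ h1
    have H2 : (par s e).Eps (a', b) (a', b') :=
      Relation.ReflTransGen.lift (fun x => (a', x)) (fun x y h => Or.inr ⟨h, rfl⟩) _ _ h2
    exact Relation.ReflTransGen.trans H1 H2

theorem par_W_both {ℓ : Lab} (h1 : ℓ ∈ s.L) (h2 : ℓ ∈ e.L) {p p' : Qs × Qe} :
    (par s e).W p [.lab ℓ] p' ↔ s.W p.1 [.lab ℓ] p'.1 ∧ e.W p.2 [.lab ℓ] p'.2 := by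
  simp only [LTS.W_one_iff, par_eps]
  constructor
  · rintro ⟨q1, q2, ⟨a, b⟩, h, c, d⟩
    rcases h with h | h | h
    · exact absurd h2 h.2.1
    · exact absurd h1 h.2.1
    · exact ⟨⟨_, _, a, h.2.2.1, c⟩, ⟨_, _, b, h.2.2.2, d⟩⟩
  · rintro ⟨⟨a, a', h, i, j⟩, ⟨b, b', k, l, m⟩⟩
    exact ⟨(a, b), (a', b'), ⟨h, k⟩, Or.inr (Or.inr ⟨h1, h2, i, l⟩), j, m⟩

theorem par_W_left {ℓ : Lab} (h1 : ℓ ∈ s.L) (h2 : ℓ ∉ e.L) {p p' : Qs × Qe} :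
    (par s e).W p [.lab ℓ] p' ↔ s.W p.1 [.lab ℓ] p'.1 ∧ e.Eps p.2 p'.2 := by
  simp only [LTS.W_one_iff, par_eps]
  constructor
  · rintro ⟨q1, q2, ⟨a, b⟩, h, c, d⟩
    rcases h with h | h | h
    · rw [h.2.2.2] at d
      exact ⟨⟨_, _, a, h.2.2.1, c⟩, Relation.ReflTransGen.trans b d⟩
    · exact absurd h.1 h2
    · exact absurd h.2.1 h2
  · rintro ⟨⟨a, a', h, i, j⟩, k⟩
    exact ⟨(a, p'.2), (a', p'.2), ⟨h, k⟩, Or.inl ⟨h1, h2, i, rfl⟩, j, .refl⟩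

theorem par_W_right {ℓ : Lab} (h1 : ℓ ∉ s.L) (h2 : ℓ ∈ e.L) {p p' : Qs × Qe} :
    (par s e).W p [.lab ℓ] p' ↔ s.Eps p.1 p'.1 ∧ e.W p.2 [.lab ℓ] p'.2 := by
  simp only [LTS.W_one_iff, par_eps]
  constructor
  · rintro ⟨q1, q2, ⟨a, b⟩, h, c, d⟩
    rcases h with h | h | h
    · exact absurd h.1 h1
    · rw [h.2.2.2] at c
      exact ⟨Relation.ReflTransGen.trans a c, ⟨_, _, b, h.2.2.1, d⟩⟩
    · exact absurd h.1 h1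
  · rintro ⟨k, ⟨b, b', h, i, j⟩⟩
    exact ⟨(p'.1, b), (p'.1, b'), ⟨k, h⟩, Or.inr (Or.inl ⟨h2, h1, i, rfl⟩), .refl, j⟩

theorem RU_mem {R : Set (Set Qs × Set Qe)} (hR : IsEcosim s e R) {Xs Xe} (h : RU s e Xs Xe) :
    (Xs, Xe) ∈ R := by
  induction h with
  | base => exact hR.1
  | syncOutE ℓ _ h1 h2 ih => exact ((hR.2 _ _ ih).1 ℓ h1 h2).2
  | syncOutS ℓ _ h1 h2 ih => exact ((hR.2 _ _ ih).2.1 ℓ h1 h2).2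
  | internalE ℓ _ h1 h2 ih => exact (hR.2 _ _ ih).2.2.1 ℓ h1 h2
  | internalS ℓ _ h1 h2 ih => exact (hR.2 _ _ ih).2.2.2.1 ℓ h1 h2
  | syncIn ℓ _ h1 h2 ih => exact (hR.2 _ _ ih).2.2.2.2.1 ℓ h1 h2
  | qdelta _ h1 h2 ih => exact (hR.2 _ _ ih).2.2.2.2.2 h1 h2

theorem RU_closed {Xs Xe} (h : RU s e Xs Xe) : s.TClosed Xs ∧ e.TClosed Xe := by
  induction h with
  | base => exact ⟨s.after_closed _, e.after_closed _⟩
  | syncOutE ℓ _ h1 h2 ih => exact ⟨s.afterSet_closed _ _, e.afterSet_closed _ _⟩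
  | syncOutS ℓ _ h1 h2 ih => exact ⟨s.afterSet_closed _ _, e.afterSet_closed _ _⟩
  | internalE ℓ _ h1 h2 ih => exact ⟨ih.1, e.afterSet_closed _ _⟩
  | internalS ℓ _ h1 h2 ih => exact ⟨s.afterSet_closed _ _, ih.2⟩
  | syncIn ℓ _ h1 h2 ih => exact ⟨s.afterSet_closed _ _, e.afterSet_closed _ _⟩
  | qdelta _ h1 h2 ih => exact ⟨s.afterSet_closed _ _, e.afterSet_closed _ _⟩

/-- the states after `σ` form exactly the product -/
def AftEq (σ : List (ELabel Lab)) (Xs : Set Qs) (Xe : Set Qe) : Prop :=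
  ∀ p : Qs × Qe, (par s e).W (par s e).q0 σ p ↔ p.1 ∈ Xs ∧ p.2 ∈ Xe

variable {s e}
variable {σ : List (ELabel Lab)} {Xs : Set Qs} {Xe : Set Qe}

theorem aft_both {ℓ : Lab} (h1 : ℓ ∈ s.L) (h2 : ℓ ∈ e.L) (h : AftEq s e σ Xs Xe) :
    AftEq s e (σ ++ [.lab ℓ]) (s.afterSet Xs [.lab ℓ]) (e.afterSet Xe [.lab ℓ]) := by
  intro p
  rw [LTS.W_snoc_iff']
  constructor
  · rintro ⟨r, hr, hw⟩
    rw [par_W_both s e h1 h2] at hw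
    exact ⟨⟨_, ((h r).1 hr).1, hw.1⟩, ⟨_, ((h r).1 hr).2, hw.2⟩⟩
  · rintro ⟨⟨a, ha, ha'⟩, ⟨b, hb, hb'⟩⟩
    exact ⟨(a, b), (h _).2 ⟨ha, hb⟩, (par_W_both s e h1 h2).2 ⟨ha', hb'⟩⟩

theorem aft_left {ℓ : Lab} (h1 : ℓ ∈ s.L) (h2 : ℓ ∉ e.L) (hc : e.TClosed Xe)
    (h : AftEq s e σ Xs Xe) :
    AftEq s e (σ ++ [.lab ℓ]) (s.afterSet Xs [.lab ℓ]) Xe := by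
  intro p
  rw [LTS.W_snoc_iff']
  constructor
  · rintro ⟨r, hr, hw⟩
    rw [par_W_left s e h1 h2] at hw
    exact ⟨⟨_, ((h r).1 hr).1, hw.1⟩, hc _ ((h r).1 hr).2 _ hw.2⟩
  · rintro ⟨⟨a, ha, ha'⟩, hb⟩
    exact ⟨(a, p.2), (h _).2 ⟨ha, hb⟩, (par_W_left s e h1 h2).2 ⟨ha', .refl⟩⟩

theorem aft_right {ℓ : Lab} (h1 : ℓ ∉ s.L) (h2 : ℓ ∈ e.L) (hc : s.TClosed Xs)
    (h : AftEq s e σ Xs Xe) :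
    AftEq s e (σ ++ [.lab ℓ]) Xs (e.afterSet Xe [.lab ℓ]) := by
  intro p
  rw [LTS.W_snoc_iff']
  constructor
  · rintro ⟨r, hr, hw⟩
    rw [par_W_right s e h1 h2] at hw
    exact ⟨hc _ ((h r).1 hr).1 _ hw.1, ⟨_, ((h r).1 hr).2, hw.2⟩⟩
  · rintro ⟨ha, ⟨b, hb, hb'⟩⟩
    exact ⟨(p.1, b), (h _).2 ⟨ha, hb⟩, (par_W_right s e h1 h2).2 ⟨.refl, hb'⟩⟩

theorem mem_outSet_lab {Q : Type} {M : LTS Q Lab} {X : Set Q} {ℓ : Lab} :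
    ELabel.lab ℓ ∈ M.outSet X ↔ ∃ q ∈ X, ℓ ∈ M.U ∧ ∃ q', M.T q (some ℓ) q' := by
  simp only [LTS.outSet, Set.mem_iUnion, exists_prop]
  rfl

theorem mem_outSet_delta {Q : Type} {M : LTS Q Lab} {X : Set Q} :
    ELabel.delta ∈ M.outSet X ↔ ∃ q ∈ X, M.Quiescent q := by
  simp [LTS.outSet, LTS.outq, LTS.outLabel]

theorem mem_inSet {Q : Type} {M : LTS Q Lab} {X : Set Q} {ℓ : Lab} :
    ℓ ∈ M.inSet X ↔ ∀ q ∈ X, ℓ ∈ M.I ∧ ∃ q', M.W q [.lab ℓ] q' := by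
  simp [LTS.inSet, LTS.inq]

theorem eps_quiescent {Q : Type} {M : LTS Q Lab} {q q' : Q} (hq : ∀ r, ¬ M.T q none r)
    (h : M.Eps q q') : q' = q := by
  induction h with
  | refl => rfl
  | tail _ h ih => subst ih; exact absurd h (hq _)

theorem W_delta {Q : Type} {M : LTS Q Lab} {q q' : Q} :
    M.W q [.delta] q' ↔ M.Eps q q' ∧ M.Quiescent q' := by
  rw [LTS.W_one_iff]
  constructor
  · rintro ⟨q1, q2, h1, ⟨rfl, h2⟩, h3⟩
    have := eps_quiescent h2.2 h3
    subst this
    exact ⟨h1, h2⟩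
  · rintro ⟨h1, h2⟩
    exact ⟨q', q', h1, ⟨rfl, h2⟩, .refl⟩

theorem afterSet_delta {Q : Type} {M : LTS Q Lab} {X : Set Q} (hc : M.TClosed X) {q : Q} :
    q ∈ M.afterSet X [.delta] ↔ q ∈ X ∧ M.Quiescent q := by
  constructor
  · rintro ⟨r, hr, h⟩
    rw [W_delta] at h
    exact ⟨hc _ hr _ h.1, h.2⟩
  · rintro ⟨h1, h2⟩
    exact ⟨q, h1, W_delta.2 ⟨.refl, h2⟩⟩

theorem par_quiescent_s10 (hcomp : Composable s e) {R : Set (Set Qs × Set Qe)}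
    (hR : IsEcosim s e R) (hX : (Xs, Xe) ∈ R)
    {a : Qs} {b : Qe} (ha : a ∈ Xs) (hb : b ∈ Xe) :
    (par s e).Quiescent (a, b) ↔ s.Quiescent a ∧ e.Quiescent b := by
  constructor
  · rintro ⟨h1, h2⟩
    have ta : ∀ r, ¬ s.T a none r := fun r h => h2 (r, b) (Or.inl ⟨h, rfl⟩)
    have tb : ∀ r, ¬ e.T b none r := fun r h => h2 (a, r) (Or.inr ⟨h, rfl⟩)
    refine ⟨⟨?_, ta⟩, ⟨?_, tb⟩⟩
    · intro x hx r hr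
      by_cases hxe : x ∈ e.L
      · have hxI : x ∈ e.I := hxe.resolve_right fun h => by
          have : x ∈ s.U ∩ e.U := ⟨hx, h⟩
          rw [hcomp] at this; exact this
        have := ((hR.2 _ _ hX).2.1 x (mem_outSet_lab.2 ⟨a, ha, hx, r, hr⟩) hxI).1
        obtain ⟨-, q', hq'⟩ := mem_inSet.1 this b hb
        obtain ⟨q1, q2, g1, g2, g3⟩ := e.W_one_iff.1 hq'
        have := eps_quiescent tb g1
        subst this
        exact h1 x (Or.inl hx) (r, q2) (Or.inr (Or.inr ⟨Or.inr hx, hxe, hr, g2⟩))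
      · exact h1 x (Or.inl hx) (r, b) (Or.inl ⟨Or.inr hx, hxe, hr, rfl⟩)
    · intro x hx r hr
      by_cases hxe : x ∈ s.L
      · have hxI : x ∈ s.I := hxe.resolve_right fun h => by
          have : x ∈ s.U ∩ e.U := ⟨h, hx⟩
          rw [hcomp] at this; exact this
        have := ((hR.2 _ _ hX).1 x (mem_outSet_lab.2 ⟨b, hb, hx, r, hr⟩) hxI).1
        obtain ⟨-, q', hq'⟩ := mem_inSet.1 this a ha
        obtain ⟨q1, q2, g1, g2, g3⟩ := s.W_one_iff.1 hq'
        have := eps_quiescent ta g1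
        subst this
        exact h1 x (Or.inr hx) (q2, r) (Or.inr (Or.inr ⟨hxe, Or.inr hx, g2, hr⟩))
      · exact h1 x (Or.inr hx) (a, r) (Or.inr (Or.inl ⟨Or.inr hx, hxe, hr, rfl⟩))
  · rintro ⟨⟨h1, h2⟩, ⟨h3, h4⟩⟩
    refine ⟨?_, ?_⟩
    · rintro x (hx | hx) p (h | h | h)
      · exact h1 x hx _ h.2.2.1
      · exact h.2.1 (Or.inr hx)
      · exact h1 x hx _ h.2.2.1
      · exact h.2.1 (Or.inr hx)
      · exact h3 x hx _ h.2.2.1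
      · exact h3 x hx _ h.2.2.2
    · rintro p (h | h)
      · exact h2 _ h.1
      · exact h4 _ h.1

theorem aft_delta (hcomp : Composable s e) {R : Set (Set Qs × Set Qe)}
    (hR : IsEcosim s e R) (hU : RU s e Xs Xe) (h : AftEq s e σ Xs Xe) :
    AftEq s e (σ ++ [.delta]) (s.afterSet Xs [.delta]) (e.afterSet Xe [.delta]) := by
  have hX := RU_mem s e hR hU
  obtain ⟨c1, c2⟩ := RU_closed s e hU
  rintro ⟨a, b⟩
  rw [LTS.W_snoc_iff', afterSet_delta c1, afterSet_delta c2]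
  constructor
  · rintro ⟨r, hr, hw⟩
    rw [W_delta] at hw
    have := (h _).1 (LTS.W_eps_s10 _ hr hw.1)
    have q := (par_quiescent_s10 hcomp hR hX this.1 this.2).1 hw.2
    exact ⟨⟨this.1, q.1⟩, this.2, q.2⟩
  · rintro ⟨⟨h1, h2⟩, h3, h4⟩
    exact ⟨(a, b), (h _).2 ⟨h1, h3⟩,
      W_delta.2 ⟨.refl, (par_quiescent_s10 hcomp hR hX h1 h3).2 ⟨h2, h4⟩⟩⟩

theorem aft_nil : AftEq s e [] (s.after []) (e.after []) := by
  intro p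
  simp only [LTS.after, LTS.W_nil_iff_s10, par_eps, Set.mem_ofPred_eq]
  rfl

theorem after_ne_of_out {Q : Type} {M : LTS Q Lab} {X : Set Q} {x : Lab}
    (h : ELabel.lab x ∈ M.outSet X) : (M.afterSet X [.lab x]).Nonempty := by
  obtain ⟨q, hq, _, q', h⟩ := mem_outSet_lab.1 h
  exact ⟨q', q, hq, M.W_one_iff.2 ⟨q, q', .refl, h, .refl⟩⟩

theorem after_ne_of_in {Q : Type} {M : LTS Q Lab} {X : Set Q} {x : Lab} (hX : X.Nonempty)
    (h : x ∈ M.inSet X) : (M.afterSet X [.lab x]).Nonempty := by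
  obtain ⟨q, hq⟩ := hX
  obtain ⟨_, q', h⟩ := mem_inSet.1 h q hq
  exact ⟨q', q, hq, h⟩

theorem L_of_in {Q : Type} {M : LTS Q Lab} {X : Set Q} {x : Lab} (hX : X.Nonempty)
    (h : x ∈ M.inSet X) : x ∈ M.I := by
  obtain ⟨q, hq⟩ := hX
  exact (mem_inSet.1 h q hq).1

theorem U_of_out {Q : Type} {M : LTS Q Lab} {X : Set Q} {x : Lab}
    (h : ELabel.lab x ∈ M.outSet X) : x ∈ M.U := by
  obtain ⟨q, hq, h, _⟩ := mem_outSet_lab.1 h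
  exact h

theorem aft_ne {Xs : Set Qs} {Xe : Set Qe} (h : AftEq s e σ Xs Xe) (h1 : Xs.Nonempty)
    (h2 : Xe.Nonempty) : ∃ p, (par s e).W (par s e).q0 σ p := by
  obtain ⟨a, ha⟩ := h1
  obtain ⟨b, hb⟩ := h2
  exact ⟨(a, b), (h _).2 ⟨ha, hb⟩⟩

theorem not_I (hs : s.WellFormed) (he : e.WellFormed) {x : Lab}
    (h : x ∈ s.U ∨ x ∈ e.U) : x ∉ (par s e).I := by
  have d1 := (fun (h1 : x ∈ s.I) (h2 : x ∈ s.U) => Set.disjoint_left.1 hs.2.2.1 h1 h2)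
  have d2 := (fun (h1 : x ∈ e.I) (h2 : x ∈ e.U) => Set.disjoint_left.1 he.2.2.1 h1 h2)
  rintro (⟨h1, h2⟩ | ⟨h1, h2⟩) <;> tauto

theorem par_L {x : Lab} : x ∈ (par s e).L ↔ x ∈ s.L ∨ x ∈ e.L := by
  simp only [LTS.L, par, Set.mem_union, Set.mem_sdiff]
  tauto

theorem fwd (hs : s.WellFormed) (he : e.WellFormed) (hcomp : Composable s e)
    {R : Set (Set Qs × Set Qe)} (hR : IsEcosim s e R) (hU : RU s e Xs Xe) :
    Xs.Nonempty ∧ Xe.Nonempty ∧ ∃ σ ∈ (par s e).Utraces, AftEq s e σ Xs Xe := by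
  induction hU with
  | base =>
    have n1 : (s.after []).Nonempty := ⟨s.q0, .nil .refl⟩
    have n2 : (e.after []).Nonempty := ⟨e.q0, .nil .refl⟩
    refine ⟨n1, n2, [], ⟨?_, aft_ne aft_nil n1 n2, ?_⟩, aft_nil⟩
    · intro x hx; simp at hx
    · intro σ1 ℓ σ2 h; simp at h
  | syncOutE ℓ hU h1 h2 ih =>
    obtain ⟨n1, n2, σ, hσ, ha⟩ := ih
    have hX := RU_mem s e hR hU
    have hu := U_of_out h1
    have A := aft_both (Or.inl h2) (Or.inr hu) ha
    have m1 := after_ne_of_in n1 ((hR.2 _ _ hX).1 ℓ h1 h2).1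
    have m2 := after_ne_of_out h1
    refine ⟨m1, m2, σ ++ [.lab ℓ], (LTS.Utraces_snoc_iff _ (x := .lab ℓ)).2 ⟨hσ, par_L.2 (Or.inr (Or.inr hu)),
      aft_ne A m1 m2, ?_⟩, A⟩
    rintro _ ⟨⟩ hI
    exact absurd hI (not_I hs he (Or.inr hu))
  | syncOutS ℓ hU h1 h2 ih =>
    obtain ⟨n1, n2, σ, hσ, ha⟩ := ih
    have hX := RU_mem s e hR hU
    have hu := U_of_out h1
    have A := aft_both (Or.inr hu) (Or.inl h2) ha
    have m2 := after_ne_of_in n2 ((hR.2 _ _ hX).2.1 ℓ h1 h2).1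
    have m1 := after_ne_of_out h1
    refine ⟨m1, m2, σ ++ [.lab ℓ], (LTS.Utraces_snoc_iff _ (x := .lab ℓ)).2 ⟨hσ, par_L.2 (Or.inl (Or.inr hu)),
      aft_ne A m1 m2, ?_⟩, A⟩
    rintro _ ⟨⟩ hI
    exact absurd hI (not_I hs he (Or.inl hu))
  | internalE ℓ hU h1 h2 ih =>
    obtain ⟨n1, n2, σ, hσ, ha⟩ := ih
    have hl : ℓ ∈ e.L := h1.elim (fun h => Or.inr (U_of_out h)) (fun h => Or.inl (L_of_in n2 h))
    have A := aft_right h2 hl (RU_closed s e hU).1 ha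
    have m2 := h1.elim after_ne_of_out (after_ne_of_in n2)
    refine ⟨n1, m2, σ ++ [.lab ℓ], (LTS.Utraces_snoc_iff _ (x := .lab ℓ)).2 ⟨hσ, par_L.2 (Or.inr hl),
      aft_ne A n1 m2, ?_⟩, A⟩
    rintro _ ⟨⟩ hI q hq
    rcases h1 with h1 | h1
    · exact absurd hI (not_I hs he (Or.inr (U_of_out h1)))
    · obtain ⟨_, q', hq'⟩ := mem_inSet.1 h1 q.2 ((ha q).1 hq).2
      exact ⟨(q.1, q'), (par_W_right s e h2 hl).2 ⟨.refl, hq'⟩⟩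
  | internalS ℓ hU h1 h2 ih =>
    obtain ⟨n1, n2, σ, hσ, ha⟩ := ih
    have hl : ℓ ∈ s.L := h1.elim (fun h => Or.inr (U_of_out h)) (fun h => Or.inl (L_of_in n1 h))
    have A := aft_left hl h2 (RU_closed s e hU).2 ha
    have m1 := h1.elim after_ne_of_out (after_ne_of_in n1)
    refine ⟨m1, n2, σ ++ [.lab ℓ], (LTS.Utraces_snoc_iff _ (x := .lab ℓ)).2 ⟨hσ, par_L.2 (Or.inl hl),
      aft_ne A m1 n2, ?_⟩, A⟩
    rintro _ ⟨⟩ hI q hq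
    rcases h1 with h1 | h1
    · exact absurd hI (not_I hs he (Or.inl (U_of_out h1)))
    · obtain ⟨_, q', hq'⟩ := mem_inSet.1 h1 q.1 ((ha q).1 hq).1
      exact ⟨(q', q.2), (par_W_left s e hl h2).2 ⟨hq', .refl⟩⟩
  | syncIn ℓ hU h1 h2 ih =>
    obtain ⟨n1, n2, σ, hσ, ha⟩ := ih
    have l1 : ℓ ∈ s.L := Or.inl (L_of_in n1 h1)
    have l2 : ℓ ∈ e.L := Or.inl (L_of_in n2 h2)
    have A := aft_both l1 l2 ha
    have m1 := after_ne_of_in n1 h1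
    have m2 := after_ne_of_in n2 h2
    refine ⟨m1, m2, σ ++ [.lab ℓ], (LTS.Utraces_snoc_iff _ (x := .lab ℓ)).2 ⟨hσ, par_L.2 (Or.inl l1),
      aft_ne A m1 m2, ?_⟩, A⟩
    rintro _ ⟨⟩ hI q hq
    obtain ⟨_, a, ha'⟩ := mem_inSet.1 h1 q.1 ((ha q).1 hq).1
    obtain ⟨_, b, hb'⟩ := mem_inSet.1 h2 q.2 ((ha q).1 hq).2
    exact ⟨(a, b), (par_W_both s e l1 l2).2 ⟨ha', hb'⟩⟩
  | qdelta hU h1 h2 ih =>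
    obtain ⟨n1, n2, σ, hσ, ha⟩ := ih
    have A := aft_delta hcomp hR hU ha
    obtain ⟨c1, c2⟩ := RU_closed s e hU
    obtain ⟨a, ha1, ha2⟩ := mem_outSet_delta.1 h1
    obtain ⟨b, hb1, hb2⟩ := mem_outSet_delta.1 h2
    have m1 : (s.afterSet _ [.delta]).Nonempty := ⟨a, (afterSet_delta c1).2 ⟨ha1, ha2⟩⟩
    have m2 : (e.afterSet _ [.delta]).Nonempty := ⟨b, (afterSet_delta c2).2 ⟨hb1, hb2⟩⟩
    refine ⟨m1, m2, σ ++ [.delta], (LTS.Utraces_snoc_iff _ (x := .delta)).2 ⟨hσ, trivial, aft_ne A m1 m2, ?_⟩, A⟩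
    rintro _ ⟨⟩

theorem bwd (hcomp : Composable s e)
    {R : Set (Set Qs × Set Qe)} (hR : IsEcosim s e R) (σ : List (ELabel Lab)) :
    σ ∈ (par s e).Utraces → ∃ Xs Xe, RU s e Xs Xe ∧ AftEq s e σ Xs Xe := by
  induction σ using List.reverseRecOn with
  | nil => exact fun _ => ⟨_, _, .base, aft_nil⟩
  | append_singleton σ x ih =>
    intro h
    obtain ⟨hσ, hL, ⟨p, hp⟩, hin⟩ := (LTS.Utraces_snoc_iff _).1 h
    obtain ⟨Xs, Xe, hU, ha⟩ := ih hσ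
    have hX := RU_mem s e hR hU
    obtain ⟨c1, c2⟩ := RU_closed s e hU
    obtain ⟨r, r', hr, hstep, -⟩ := (LTS.W_snoc_iff_s10 _).1 hp
    obtain ⟨r1, r2⟩ := (ha r).1 hr
    cases x with
    | delta =>
      have q := (par_quiescent_s10 hcomp hR hX r1 r2).1 hstep.2
      exact ⟨_, _, .qdelta hU (mem_outSet_delta.2 ⟨_, r1, q.1⟩) (mem_outSet_delta.2 ⟨_, r2, q.2⟩),
        aft_delta hcomp hR hU ha⟩
    | lab ℓ =>
      have hdis : ¬ (ℓ ∈ s.U ∧ ℓ ∈ e.U) := fun hh => by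
        have : ℓ ∈ s.U ∩ e.U := hh
        rw [hcomp] at this; exact this
      have hin := hin ℓ rfl
      rcases hstep with ⟨l1, l2, t, _⟩ | ⟨l2, l1, t, _⟩ | ⟨l1, l2, t1, t2⟩
      · refine ⟨_, _, .internalS ℓ hU ?_ l2, aft_left l1 l2 c2 ha⟩
        rcases l1 with hi | hu
        · right
          refine mem_inSet.2 fun q hq => ⟨hi, ?_⟩
          obtain ⟨q', hq'⟩ := hin (Or.inl ⟨hi, fun h => l2 (Or.inr h)⟩) (q, r.2) ((ha _).2 ⟨hq, r2⟩)
          exact ⟨_, ((par_W_left s e (Or.inl hi) l2).1 hq').1⟩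
        · exact Or.inl (mem_outSet_lab.2 ⟨_, r1, hu, _, t⟩)
      · refine ⟨_, _, .internalE ℓ hU ?_ l1, aft_right l1 l2 c1 ha⟩
        rcases l2 with hi | hu
        · right
          refine mem_inSet.2 fun q hq => ⟨hi, ?_⟩
          obtain ⟨q', hq'⟩ := hin (Or.inr ⟨hi, fun h => l1 (Or.inr h)⟩) (r.1, q) ((ha _).2 ⟨r1, hq⟩)
          exact ⟨_, ((par_W_right s e l1 (Or.inl hi)).1 hq').2⟩
        · exact Or.inl (mem_outSet_lab.2 ⟨_, r2, hu, _, t⟩)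
      · refine ⟨_, _, ?_, aft_both l1 l2 ha⟩
        by_cases u1 : ℓ ∈ s.U
        · exact .syncOutS ℓ hU (mem_outSet_lab.2 ⟨_, r1, u1, _, t1⟩)
            (l2.resolve_right fun h => hdis ⟨u1, h⟩)
        by_cases u2 : ℓ ∈ e.U
        · exact .syncOutE ℓ hU (mem_outSet_lab.2 ⟨_, r2, u2, _, t2⟩) (l1.resolve_right u1)
        have i1 := l1.resolve_right u1
        have i2 := l2.resolve_right u2
        refine .syncIn ℓ hU (mem_inSet.2 fun q hq => ⟨i1, ?_⟩) (mem_inSet.2 fun q hq => ⟨i2, ?_⟩)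
        · obtain ⟨q', hq'⟩ := hin (Or.inl ⟨i1, u2⟩) (q, r.2) ((ha _).2 ⟨hq, r2⟩)
          exact ⟨_, ((par_W_both s e l1 l2).1 hq').1⟩
        · obtain ⟨q', hq'⟩ := hin (Or.inl ⟨i1, u2⟩) (r.1, q) ((ha _).2 ⟨r1, hq⟩)
          exact ⟨_, ((par_W_both s e l1 l2).1 hq').2⟩

end

theorem RU_utraces_bi_implication {Qs Qe Lab : Type}
    (s : LTS Qs Lab) (e : LTS Qe Lab)
    (hs : s.WellFormed) (he : e.WellFormed)
    (hcomp : Composable s e) (heco : Eco s e)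
    (qs : Qs) (qe : Qe) :
    (∃ (Xs : Set Qs) (Xe : Set Qe), RU s e Xs Xe ∧ qs ∈ Xs ∧ qe ∈ Xe) ↔
      ∃ σ ∈ (par s e).Utraces, (par s e).W (par s e).q0 σ (qs, qe) := by
  obtain ⟨R, hR⟩ := heco
  constructor
  · rintro ⟨Xs, Xe, hU, h1, h2⟩
    obtain ⟨_, _, σ, hσ, ha⟩ := fwd hs he hcomp hR hU
    exact ⟨σ, hσ, (ha _).2 ⟨h1, h2⟩⟩
  · rintro ⟨σ, hσ, hw⟩
    obtain ⟨Xs, Xe, hU, ha⟩ := bwd hcomp hR σ hσ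
    exact ⟨Xs, Xe, hU, (ha _).1 hw⟩
end
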